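/- Let K be an algebraically closed field of characteristic zero and let A = A(α,β,0) be a down-up algebra with β ≠ 0 and α + β ≠ 1. If t² − αt − β = (t − λ)(t − μ) with λ ≠ μ and λ/μ not a root of unity, then 2 ≤ sr(A) ≤ 3. -/

import Mathlib

noncomputable section

/-- Defining relations of the down-up algebra `A(α,β,γ)`:
`D = ι 0`, `U = ι 1`, relations `DU² = αUDU + βU²D + γU` and `D²U = αDUD + βUD² + γD`. -/
inductive DownUpRel (K : Type) [Field K] (a b g : K) :
    FreeAlgebra K (Fin 2) → FreeAlgebra K (Fin 2) → Prop
  | rel1 : DownUpRel K a b g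
      (FreeAlgebra.ι K (0 : Fin 2) * FreeAlgebra.ι K (1 : Fin 2) * FreeAlgebra.ι K (1 : Fin 2))
      (a • (FreeAlgebra.ι K (1 : Fin 2) * FreeAlgebra.ι K (0 : Fin 2) * FreeAlgebra.ι K (1 : Fin 2)) +
       b • (FreeAlgebra.ι K (1 : Fin 2) * FreeAlgebra.ι K (1 : Fin 2) * FreeAlgebra.ι K (0 : Fin 2)) +
       g • FreeAlgebra.ι K (1 : Fin 2))
  | rel2 : DownUpRel K a b g
      (FreeAlgebra.ι K (0 : Fin 2) * FreeAlgebra.ι K (0 : Fin 2) * FreeAlgebra.ι K (1 : Fin 2))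
      (a • (FreeAlgebra.ι K (0 : Fin 2) * FreeAlgebra.ι K (1 : Fin 2) * FreeAlgebra.ι K (0 : Fin 2)) +
       b • (FreeAlgebra.ι K (1 : Fin 2) * FreeAlgebra.ι K (0 : Fin 2) * FreeAlgebra.ι K (0 : Fin 2)) +
       g • FreeAlgebra.ι K (0 : Fin 2))

/-- The down-up algebra `A(α,β,γ)`. -/
abbrev DownUp (K : Type) [Field K] (a b g : K) := RingQuot (DownUpRel K a b g)

/-- The generator `D` of `A(α,β,γ)`. -/
def DownUp.D (K : Type) [Field K] (a b g : K) : DownUp K a b g :=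
  RingQuot.mkAlgHom K (DownUpRel K a b g) (FreeAlgebra.ι K (0 : Fin 2))

/-- The generator `U` of `A(α,β,γ)`. -/
def DownUp.U (K : Type) [Field K] (a b g : K) : DownUp K a b g :=
  RingQuot.mkAlgHom K (DownUpRel K a b g) (FreeAlgebra.ι K (1 : Fin 2))

/-- A row `(u₁,…,u_s)` over `R` is unimodular if `u₁R + ⋯ + u_sR = R`. -/
def IsUnimodularRow {R : Type} [Ring R] {s : ℕ} (u : Fin s → R) : Prop :=
  Submodule.span Rᵐᵒᵖ (Set.range u) = ⊤

/-- A unimodular row `(u₁,…,u_{s+1})` is stable if there exist `r₁,…,r_s` such that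
`(u₁ + u_{s+1}r₁, …, u_s + u_{s+1}r_s)` is unimodular. -/
def IsStableRow {R : Type} [Ring R] {s : ℕ} (u : Fin (s + 1) → R) : Prop :=
  ∃ r : Fin s → R,
    IsUnimodularRow (fun i : Fin s => u i.castSucc + u (Fin.last s) * r i)

/-- The stable rank of `R`: the least `t` such that every unimodular row of
length `t + 1` over `R` is stable. -/
noncomputable def stableRank (R : Type) [Ring R] : ℕ :=
  sInf {t : ℕ | ∀ u : Fin (t + 1) → R, IsUnimodularRow u → IsStableRow u}

namespace DUA

open Classical

lemma upper_fg {m : ℕ} (I : Set (Fin m → ℕ)) :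
    ∃ G : Finset (Fin m → ℕ), (∀ g ∈ G, g ∈ I) ∧ ∀ v ∈ I, ∃ g ∈ G, g ≤ v := by
  have hfin : {v | Minimal (· ∈ I) v}.Finite := by
    apply WellQuasiOrderedLE.finite_of_isAntichain
    exact setOfPred_minimal_antichain _
  refine ⟨hfin.toFinset, ?_, ?_⟩
  · intro g hg
    have := hfin.mem_toFinset.1 hg
    exact this.prop
  · intro v hv
    obtain ⟨g, hgv, hg⟩ := exists_minimal_le_of_wellFoundedLT (· ∈ I) v hv
    exact ⟨g, hfin.mem_toFinset.2 hg, hgv⟩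

lemma upper_acc {m : ℕ} (s : ℕ → Set (Fin m → ℕ)) (hs : Monotone s)
    (hu : ∀ t, IsUpperSet (s t)) : ∃ t0, ∀ t, t0 ≤ t → s t = s t0 := by
  obtain ⟨G, hG, hG'⟩ := upper_fg (⋃ t, s t)
  have : ∀ g, ∃ t, g ∈ G → g ∈ s t := by
    intro g
    by_cases hg : g ∈ G
    · obtain ⟨t, ht⟩ := Set.mem_iUnion.1 (hG g hg)
      exact ⟨t, fun _ => ht⟩
    · exact ⟨0, fun h => absurd h hg⟩
  choose τ hτ using this
  refine ⟨G.sup τ, fun t ht => Set.Subset.antisymm ?_ (hs ht)⟩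
  intro v hv
  obtain ⟨g, hg, hgv⟩ := hG' v (Set.mem_iUnion.2 ⟨t, hv⟩)
  exact hu _ hgv (hs (Finset.le_sup hg) (hτ g hg))

/-- total degree -/
def deg {m : ℕ} (v : Fin m → ℕ) : ℕ := ∑ i, v i

lemma deg_add {m : ℕ} (v w : Fin m → ℕ) : deg (v + w) = deg v + deg w := by
  simp [deg, Finset.sum_add_distrib]

lemma deg_cons {m : ℕ} (t : ℕ) (w : Fin m → ℕ) :
    deg (Fin.cons t w : Fin (m + 1) → ℕ) = t + deg w := by
  simp [deg, Fin.sum_univ_succ]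

lemma le_deg {m : ℕ} (v : Fin m → ℕ) (i : Fin m) : v i ≤ deg v :=
  Finset.single_le_sum (f := v) (fun _ _ => Nat.zero_le _) (Finset.mem_univ i)

lemma deg_mono {m : ℕ} {v w : Fin m → ℕ} (h : v ≤ w) : deg v ≤ deg w :=
  Finset.sum_le_sum fun i _ => h i

lemma deg_finite (m n : ℕ) : {v : Fin m → ℕ | deg v ≤ n}.Finite := by
  apply (Set.finite_Iic (fun _ : Fin m => n)).subset
  intro v hv i
  exact (le_deg v i).trans hv

/-- the finite set of exponents of degree at most `n` -/
def ball (m n : ℕ) : Finset (Fin m → ℕ) := (deg_finite m n).toFinset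

lemma mem_ball {m n : ℕ} {v : Fin m → ℕ} : v ∈ ball m n ↔ deg v ≤ n := by
  simp [ball]

/-- number of elements of `E` of degree at most `n` -/
def cnt {m : ℕ} (E : Set (Fin m → ℕ)) (n : ℕ) : ℕ := ((ball m n).filter (· ∈ E)).card

lemma cnt_mono {m : ℕ} {E E' : Set (Fin m → ℕ)} (h : E ⊆ E') {n n' : ℕ} (hn : n ≤ n') :
    cnt E n ≤ cnt E' n' := by
  apply Finset.card_le_card
  intro v hv
  simp only [Finset.mem_filter, mem_ball] at hv ⊢
  exact ⟨hv.1.trans hn, h hv.2⟩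

lemma cnt_slices {m : ℕ} (E : Set (Fin (m + 1) → ℕ)) (n : ℕ) :
    cnt E n = ∑ t ∈ Finset.range (n + 1), cnt {w : Fin m → ℕ | (Fin.cons t w : Fin (m + 1) → ℕ) ∈ E} (n - t) := by
  unfold cnt
  rw [Finset.card_eq_sum_card_fiberwise (f := fun v => v 0) (t := Finset.range (n + 1))]
  · apply Finset.sum_congr rfl
    intro t ht
    have ht' : t ≤ n := by simpa [Nat.lt_succ_iff] using ht
    apply Finset.card_nbij' (fun v => Fin.tail v) (fun w => Fin.cons t w)
    · intro v hv
      simp only [Finset.coe_filter, Finset.mem_filter, mem_ball, Set.mem_ofPred_eq] at hv ⊢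
      obtain ⟨⟨h1, h2⟩, h3⟩ := hv
      have hc : (Fin.cons t (Fin.tail v) : Fin (m + 1) → ℕ) = v := by
        rw [← h3]; exact Fin.cons_self_tail v
      have h4 := deg_cons t (Fin.tail v)
      rw [hc] at h4
      refine ⟨by omega, by rw [hc]; exact h2⟩
    · intro w hw
      simp only [Finset.coe_filter, Finset.mem_filter, mem_ball, Set.mem_ofPred_eq] at hw ⊢
      refine ⟨⟨?_, hw.2⟩, by simp⟩
      rw [deg_cons]; omega
    · intro v hv
      simp only [Finset.coe_filter, Finset.mem_filter, Set.mem_ofPred_eq] at hv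
      rw [← hv.2]; exact Fin.cons_self_tail v
    · intro w hw
      simp
  · intro v hv
    simp only [Finset.coe_filter, mem_ball, Set.mem_ofPred_eq] at hv
    have := le_deg v 0
    simp only [Finset.coe_range, Set.mem_Iio]; omega

/-- growth function: `0` if `b = 0`, and `(n+1)^(b-1)` otherwise -/
def fb : ℕ → ℕ → ℕ
  | 0, _ => 0
  | b + 1, n => (n + 1) ^ b

lemma fb_mono (b : ℕ) {n n' : ℕ} (h : n ≤ n') : fb b n ≤ fb b n' := by
  cases b with
  | zero => simp [fb]
  | succ b => exact Nat.pow_le_pow_left (by omega) b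

lemma fb_shift (b k : ℕ) : ∃ C, ∀ n, fb b (n + k) ≤ C * fb b n := by
  cases b with
  | zero => exact ⟨0, fun n => by simp [fb]⟩
  | succ b =>
    refine ⟨(k + 1) ^ b, fun n => ?_⟩
    simp only [fb]
    rw [← mul_pow]
    apply Nat.pow_le_pow_left
    nlinarith [Nat.zero_le (k * n)]

theorem dichotomy (m : ℕ) : ∀ (b : ℕ) (I I' : Set (Fin m → ℕ)), IsUpperSet I → IsUpperSet I' →
    (∃ C, ∀ n, cnt (I' \ I) n ≤ C * fb b n) ∨
    (∃ a0, ∀ n k, m * n + a0 ≤ k → (n + 1) ^ b ≤ cnt (I' \ I) k) := by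
  have zero_case : ∀ (m : ℕ) (E : Set (Fin m → ℕ)), (∃ C, ∀ n, cnt E n ≤ C * fb 0 n) ∨
    (∃ a0, ∀ n k, m * n + a0 ≤ k → (n + 1) ^ 0 ≤ cnt E k) := by
    intro m E
    by_cases hE : E = ∅
    · left
      refine ⟨0, fun n => ?_⟩
      simp [hE, cnt]
    · right
      obtain ⟨v, hv⟩ := Set.nonempty_iff_ne_empty.2 hE
      refine ⟨deg v, fun n k h => ?_⟩
      simp only [pow_zero]
      apply Finset.card_pos.2
      refine ⟨v, ?_⟩
      simp only [Finset.mem_filter, mem_ball]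
      exact ⟨by omega, hv⟩
  induction m with
  | zero =>
    intro b I I' _ _
    cases b with
    | zero => exact zero_case _ _
    | succ b =>
      left
      refine ⟨1, fun n => ?_⟩
      calc cnt (I' \ I) n ≤ (Finset.univ : Finset (Fin 0 → ℕ)).card :=
            Finset.card_le_card (Finset.subset_univ _)
        _ = 1 := by simp
        _ ≤ 1 * fb (b + 1) n := by
            simp only [fb, one_mul]; exact Nat.one_le_pow _ _ (by omega)
  | succ m ih =>
    intro b I I' hI hI'
    cases b with
    | zero => exact zero_case _ _
    | succ b =>
      set sl : Set (Fin (m + 1) → ℕ) → ℕ → Set (Fin m → ℕ) :=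
        fun E t => {w : Fin m → ℕ | (Fin.cons t w : Fin (m + 1) → ℕ) ∈ E} with hsl
      have hup : ∀ E : Set (Fin (m + 1) → ℕ), IsUpperSet E → ∀ t, IsUpperSet (sl E t) := by
        intro E hE t v w hvw hv
        refine hE ?_ hv
        intro i
        refine Fin.cases ?_ (fun j => ?_) i
        · simp
        · simpa using hvw j
      have hmono : ∀ E : Set (Fin (m + 1) → ℕ), IsUpperSet E → Monotone (sl E) := by
        intro E hE t t' htt w hw
        refine hE ?_ hw
        intro i
        refine Fin.cases ?_ (fun j => ?_) i
        · simpa using htt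
        · simp
      obtain ⟨t1, ht1⟩ := upper_acc (sl I) (hmono I hI) (hup I hI)
      obtain ⟨t2, ht2⟩ := upper_acc (sl I') (hmono I' hI') (hup I' hI')
      set t0 := max t1 t2 with ht0
      have hst : ∀ t, t0 ≤ t → sl (I' \ I) t = sl I' t0 \ sl I t0 := by
        intro t ht
        have e1 : sl I t = sl I t0 := by
          rw [ht1 t (by omega), ht1 t0 (by omega)]
        have e2 : sl I' t = sl I' t0 := by
          rw [ht2 t (by omega), ht2 t0 (by omega)]
        rw [← e1, ← e2]; rfl
      have hcs := fun n => cnt_slices (I' \ I) n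
      change ∀ n, _ = ∑ t ∈ Finset.range (n + 1), cnt (sl (I' \ I) t) (n - t) at hcs
      rcases ih b (sl I t0) (sl I' t0) (hup I hI t0) (hup I' hI' t0) with ⟨C, hC⟩ | ⟨a0, ha0⟩
      · by_cases hbig : ∃ t, ∃ a0, ∀ n k, m * n + a0 ≤ k →
            (n + 1) ^ (b + 1) ≤ cnt (sl I' t \ sl I t) k
        · right
          obtain ⟨t, a0, ha0⟩ := hbig
          refine ⟨a0 + t, fun n k hk => ?_⟩
          rw [hcs]
          have hk' : (m + 1) * n = m * n + n := by ring
          refine (ha0 n (k - t) (by omega)).trans ?_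
          exact Finset.single_le_sum (f := fun t => cnt (sl (I' \ I) t) (k - t))
            (fun _ _ => Nat.zero_le _) (Finset.mem_range.2 (by omega))
        · left
          have hsmall : ∀ t, ∃ C, ∀ n, cnt (sl I' t \ sl I t) n ≤ C * fb (b + 1) n := by
            intro t
            rcases ih (b + 1) (sl I t) (sl I' t) (hup I hI t) (hup I' hI' t) with h | h
            · exact h
            · exact absurd ⟨t, h⟩ hbig
          choose Ct hCt using hsmall
          refine ⟨(∑ t ∈ Finset.range t0, Ct t) + C, fun n => ?_⟩
          rw [hcs]
          have hterm : ∀ t ∈ Finset.range (n + 1), cnt (sl (I' \ I) t) (n - t) ≤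
              (if t < t0 then Ct t * fb (b + 1) n else 0) + C * fb b n := by
            intro t _
            by_cases h : t < t0
            · rw [if_pos h]
              refine le_trans ?_ (Nat.le_add_right _ _)
              refine (cnt_mono le_rfl (Nat.sub_le n t)).trans (hCt t n)
            · rw [if_neg h, zero_add, hst t (by omega)]
              exact (cnt_mono le_rfl (Nat.sub_le n t)).trans (hC n)
          refine (Finset.sum_le_sum hterm).trans ?_
          rw [Finset.sum_add_distrib, ← Finset.sum_filter, add_mul, Finset.sum_mul]
          apply add_le_add
          · apply Finset.sum_le_sum_of_subset
            intro t ht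
            simp only [Finset.mem_filter] at ht
            exact Finset.mem_range.2 ht.2
          · rw [Finset.sum_const, Finset.card_range, smul_eq_mul]
            cases b with
            | zero => simp [fb]
            | succ b => simp only [fb]; rw [pow_succ]; apply le_of_eq; ring
      · right
        refine ⟨a0 + t0, fun n k hk => ?_⟩
        rw [hcs]
        have hk' : (m + 1) * n = m * n + n := by ring
        have hsub : Finset.Ico t0 (t0 + (n + 1)) ⊆ Finset.range (k + 1) := by
          intro t ht
          simp only [Finset.mem_Ico] at ht
          exact Finset.mem_range.2 (by omega)
        refine le_trans ?_ (Finset.sum_le_sum_of_subset hsub)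
        have hterm : ∀ t ∈ Finset.Ico t0 (t0 + (n + 1)), (n + 1) ^ b ≤ cnt (sl (I' \ I) t) (k - t) := by
          intro t ht
          simp only [Finset.mem_Ico] at ht
          rw [hst t ht.1]
          exact ha0 n (k - t) (by omega)
        refine le_trans ?_ (Finset.sum_le_sum hterm)
        rw [Finset.sum_const, Nat.card_Ico, smul_eq_mul, pow_succ]
        apply le_of_eq
        have : t0 + (n + 1) - t0 = n + 1 := by omega
        rw [this]; ring

end DUA

namespace DUA

open Classical Submodule

/-- ordering key -/
def key (v : Fin 3 → ℕ) : ℕ ×ₗ ℕ ×ₗ ℕ := toLex (deg v, toLex (v 0, v 1))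

lemma key_inj {v w : Fin 3 → ℕ} (h : key v = key w) : v = w := by
  simp only [key, EmbeddingLike.apply_eq_iff_eq, Prod.mk.injEq] at h
  obtain ⟨h1, h2, h3⟩ := h
  simp only [deg, Fin.sum_univ_three] at h1
  ext i
  fin_cases i
  · exact h2
  · exact h3
  · simp; omega

lemma key_add (v w : Fin 3 → ℕ) : key (v + w) = key v + key w := by
  simp only [key, deg_add]
  rfl

lemma deg_le_of_key_le {v w : Fin 3 → ℕ} (h : key v ≤ key w) : deg v ≤ deg w := by
  rcases (Prod.Lex.le_iff.1 h) with h | h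
  · exact le_of_lt h
  · exact le_of_eq h.1

lemma key_lt_of_deg_lt {v w : Fin 3 → ℕ} (h : deg v < deg w) : key v < key w :=
  Prod.Lex.lt_iff.2 (Or.inl h)

/-- unit exponent -/
def ev (s : Fin 3) : Fin 3 → ℕ := Pi.single s 1

lemma deg_ev (s : Fin 3) : deg (ev s) = 1 := by
  simp [deg, ev]

lemma deg_add_ev (v : Fin 3 → ℕ) (s : Fin 3) : deg (v + ev s) = deg v + 1 := by
  rw [deg_add, deg_ev]

/-- A filtered algebra with quasi-commuting monomials -/
structure PBW (K R : Type) [Field K] [Ring R] [Algebra K R] where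
  m : (Fin 3 → ℕ) → R
  g : Fin 3 → R
  m_zero : m 0 = 1
  right : ∀ v s, ∃ c : K, c ≠ 0 ∧
    m v * g s - c • m (v + ev s) ∈ span K (m '' {u | deg u < deg v + 1})
  left : ∀ v s, ∃ c : K, c ≠ 0 ∧
    g s * m v - c • m (v + ev s) ∈ span K (m '' {u | deg u < deg v + 1})
  exh : ∀ r : R, ∃ n, r ∈ span K (m '' {u | deg u < n})

namespace PBW
variable {K R : Type} [Field K] [Ring R] [Algebra K R] (P : PBW K R)

/-- span of monomials -/
def sp (S : Set (Fin 3 → ℕ)) : Submodule K R := span K (P.m '' S)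

/-- degree less than `n` -/
def G (n : ℕ) : Submodule K R := P.sp {u | deg u < n}

/-- degree at most `n` -/
def F (n : ℕ) : Submodule K R := P.sp {u | deg u ≤ n}

/-- smaller key -/
def B (w : Fin 3 → ℕ) : Submodule K R := P.sp {u | key u < key w}

lemma sp_mono {S T : Set (Fin 3 → ℕ)} (h : S ⊆ T) : P.sp S ≤ P.sp T :=
  span_mono (Set.image_mono h)

lemma m_mem {S : Set (Fin 3 → ℕ)} {v} (h : v ∈ S) : P.m v ∈ P.sp S :=
  subset_span ⟨v, h, rfl⟩

lemma sp_induct {S : Set (Fin 3 → ℕ)} (Q : Submodule K R) (φ : R →ₗ[K] R)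
    (h : ∀ v ∈ S, φ (P.m v) ∈ Q) : ∀ x ∈ P.sp S, φ x ∈ Q := by
  have : P.sp S ≤ Q.comap φ := span_le.2 (by rintro _ ⟨v, hv, rfl⟩; exact h v hv)
  exact this

lemma G_succ (n : ℕ) : P.G (n + 1) = P.F n := by
  simp only [G, F, Nat.lt_succ_iff]

lemma G_mono {n n' : ℕ} (h : n ≤ n') : P.G n ≤ P.G n' :=
  P.sp_mono fun _ hu => lt_of_lt_of_le hu h

lemma F_mono {n n' : ℕ} (h : n ≤ n') : P.F n ≤ P.F n' :=
  P.sp_mono fun _ hu => le_trans hu h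

lemma G_le_F (n : ℕ) : P.G n ≤ P.F n := P.sp_mono fun u hu => (show deg u < n from hu).le

lemma G_le_B {n : ℕ} {w} (h : n ≤ deg w) : P.G n ≤ P.B w :=
  P.sp_mono fun _ hu => key_lt_of_deg_lt (lt_of_lt_of_le hu h)

lemma B_mono {v w} (h : key v ≤ key w) : P.B v ≤ P.B w :=
  P.sp_mono fun _ hu => lt_of_lt_of_le hu h

lemma exhF (r : R) : ∃ n, r ∈ P.F n := by
  obtain ⟨n, hn⟩ := P.exh r
  exact ⟨n, P.G_le_F n hn⟩

lemma right' (v s) : ∃ c : K, c ≠ 0 ∧ P.m v * P.g s - c • P.m (v + ev s) ∈ P.G (deg v + 1) :=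
  P.right v s

lemma G_mul_g {n : ℕ} {x : R} (hx : x ∈ P.G n) (s) : x * P.g s ∈ P.G (n + 1) := by
  refine P.sp_induct (P.G (n + 1)) (LinearMap.mulRight K (P.g s)) ?_ x hx
  intro v hv
  obtain ⟨c, _, h⟩ := P.right' v s
  have h1 : c • P.m (v + ev s) ∈ P.G (n + 1) := smul_mem _ _ (P.m_mem (by
    show deg _ < _
    rw [deg_add_ev]; exact Nat.succ_lt_succ hv))
  have := add_mem (P.G_mono (by exact Nat.succ_le_of_lt (Nat.lt_succ_of_lt hv)) h) h1
  simpa using this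

lemma exists_ev {u : Fin 3 → ℕ} (h : u ≠ 0) : ∃ u' s, u = u' + ev s := by
  obtain ⟨s, hs⟩ := Function.ne_iff.1 h
  refine ⟨u - ev s, s, ?_⟩
  have : ev s ≤ u := by
    intro i
    by_cases hi : i = s
    · subst hi; simp [ev]; exact Nat.one_le_iff_ne_zero.2 hs
    · simp [ev, hi]
  exact (tsub_add_cancel_of_le this).symm

lemma mm (u : Fin 3 → ℕ) : ∀ v, ∃ c : K, c ≠ 0 ∧
    P.m v * P.m u - c • P.m (v + u) ∈ P.G (deg v + deg u) := by
  induction hN : deg u using Nat.strong_induction_on generalizing u with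
  | _ N ih =>
  intro v
  by_cases hu : u = 0
  · subst hu
    exact ⟨1, one_ne_zero, by simp [P.m_zero]⟩
  obtain ⟨u', s, rfl⟩ := exists_ev hu
  rw [deg_add_ev] at hN
  subst hN
  obtain ⟨c1, hc1, h1⟩ := P.right' u' s
  obtain ⟨c2, hc2, h2⟩ := ih (deg u') (by omega) u' rfl v
  obtain ⟨c3, hc3, h3⟩ := P.right' (v + u') s
  have h4 : ∀ x ∈ P.G (deg u' + 1), P.m v * x ∈ P.G (deg v + (deg u' + 1)) := by
    refine P.sp_induct _ (LinearMap.mulLeft K (P.m v)) ?_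
    intro w hw
    obtain ⟨c, _, h⟩ := ih (deg w) hw w rfl v
    have hw' : deg w < deg u' + 1 := hw
    have h5 : c • P.m (v + w) ∈ P.G (deg v + (deg u' + 1)) := smul_mem _ _ (P.m_mem (by
      show deg _ < _
      rw [deg_add]; omega))
    have := add_mem (P.G_mono (by omega) h) h5
    simpa using this
  have h5 := h4 _ h1
  have h6 := P.G_mul_g h2 s
  refine ⟨c1⁻¹ * (c2 * c3), by positivity, ?_⟩
  have h7 : P.m v * P.m (u' + ev s) - (c1⁻¹ * (c2 * c3)) • P.m (v + (u' + ev s)) =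
      c1⁻¹ • ((P.m v * P.m u' - c2 • P.m (v + u')) * P.g s
        + c2 • (P.m (v + u') * P.g s - c3 • P.m (v + u' + ev s))
        - P.m v * (P.m u' * P.g s - c1 • P.m (u' + ev s))) := by
    have : P.m v * P.m (u' + ev s) = c1⁻¹ • c1 • (P.m v * P.m (u' + ev s)) := by
      rw [smul_smul, inv_mul_cancel₀ hc1, one_smul]
    rw [this, mul_smul, ← smul_sub]
    congr 1
    simp only [sub_mul, mul_sub, smul_sub, smul_mul_assoc, mul_smul_comm, mul_smul, add_assoc,
      mul_assoc]
    abel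
  rw [h7]
  refine smul_mem _ _ (sub_mem (add_mem (P.G_mono (by omega) h6) (smul_mem _ _ ?_)) h5)
  refine P.G_mono ?_ h3
  rw [deg_add]; omega

lemma G_mul_m {n : ℕ} {x : R} (hx : x ∈ P.G n) (u) : x * P.m u ∈ P.G (n + deg u) := by
  refine P.sp_induct _ (LinearMap.mulRight K (P.m u)) ?_ x hx
  intro v hv
  obtain ⟨c, _, h⟩ := P.mm u v
  have hv' : deg v < n := hv
  have h1 : c • P.m (v + u) ∈ P.G (n + deg u) := smul_mem _ _ (P.m_mem (by
    show deg _ < _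
    rw [deg_add]; omega))
  have := add_mem (P.G_mono (by omega) h) h1
  simpa using this

lemma F_mul {a b : ℕ} {x y : R} (hx : x ∈ P.F a) (hy : y ∈ P.F b) : x * y ∈ P.F (a + b) := by
  refine P.sp_induct _ (LinearMap.mulLeft K x) ?_ y hy
  intro u hu
  have hu' : deg u ≤ b := hu
  rw [← G_succ] at hx ⊢
  exact P.G_mono (by omega) (P.G_mul_m hx u)

lemma B_mul_m {v : Fin 3 → ℕ} {x : R} (hx : x ∈ P.B v) (u) : x * P.m u ∈ P.B (v + u) := by
  refine P.sp_induct _ (LinearMap.mulRight K (P.m u)) ?_ x hx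
  intro w hw
  obtain ⟨c, _, h⟩ := P.mm u w
  have hw' : key w < key v := hw
  have h1 : c • P.m (w + u) ∈ P.B (v + u) := smul_mem _ _ (P.m_mem (by
    show key _ < key _
    rw [key_add, key_add]; exact add_lt_add_left hw' _))
  have hd := deg_le_of_key_le hw'.le
  have := add_mem (P.G_le_B (by rw [deg_add]; omega) h) h1
  simpa using this

lemma lead {S : Set (Fin 3 → ℕ)} {x : R} (hx : x ∈ P.sp S) :
    x = 0 ∨ ∃ v ∈ S, ∃ a : K, a ≠ 0 ∧ x - a • P.m v ∈ P.sp {u | u ∈ S ∧ key u < key v} := by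
  obtain ⟨l, hl, rfl⟩ := (Finsupp.mem_span_image_iff_linearCombination K).1 hx
  by_cases h0 : l = 0
  · left; simp [h0]
  right
  obtain ⟨v, hv, hmax⟩ := Finset.exists_max_image l.support key (Finsupp.support_nonempty_iff.2 h0)
  refine ⟨v, hl hv, l v, Finsupp.mem_support_iff.1 hv, ?_⟩
  rw [Finsupp.linearCombination_apply, Finsupp.sum, ← Finset.add_sum_erase _ _ hv, add_sub_cancel_left]
  refine sum_mem fun u hu => smul_mem _ _ (P.m_mem ?_)
  obtain ⟨hne, hu⟩ := Finset.mem_erase.1 hu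
  exact ⟨hl hu, lt_of_le_of_ne (hmax u hu) fun h => hne (key_inj h)⟩

/-- right ideal -/
def IsR (J : Submodule K R) : Prop := ∀ x ∈ J, ∀ r, x * r ∈ J

/-- leading exponents -/
def ini (J : Submodule K R) : Set (Fin 3 → ℕ) := {v | ∃ f ∈ J, f - P.m v ∈ P.B v}

lemma ini_mono {J J' : Submodule K R} (h : J ≤ J') : P.ini J ⊆ P.ini J' := by
  rintro v ⟨f, hf, hv⟩
  exact ⟨f, h hf, hv⟩

lemma ini_of_lead {J : Submodule K R} {x : R} (hx : x ∈ J) {a : K} (ha : a ≠ 0) {v}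
    (h : x - a • P.m v ∈ P.B v) : v ∈ P.ini J := by
  refine ⟨a⁻¹ • x, smul_mem _ _ hx, ?_⟩
  have := smul_mem _ a⁻¹ h
  rwa [smul_sub, smul_smul, inv_mul_cancel₀ ha, one_smul] at this

lemma mul_lead {x : R} {v} (h : x - P.m v ∈ P.B v) (u) :
    ∃ c : K, c ≠ 0 ∧ x * P.m u - c • P.m (v + u) ∈ P.B (v + u) := by
  obtain ⟨c, hc, h1⟩ := P.mm u v
  refine ⟨c, hc, ?_⟩
  have h2 := P.B_mul_m h u
  have h3 := add_mem h2 (P.G_le_B (by rw [deg_add]) h1)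
  rwa [sub_mul, sub_add_sub_cancel] at h3

lemma ini_upper {J : Submodule K R} (hJ : IsR J) : IsUpperSet (P.ini J) := by
  rintro v w hvw ⟨f, hf, hv⟩
  obtain ⟨c, hc, h⟩ := P.mul_lead hv (w - v)
  rw [add_tsub_cancel_of_le hvw] at h
  exact P.ini_of_lead (hJ f hf _) hc h

lemma groebner {J : Submodule K R} (hJ : IsR J) : ∃ Gs : Finset R, (∀ g ∈ Gs, g ∈ J) ∧
    ∀ n, ∀ x ∈ J, x ∈ P.F n → ∃ c : R → R, (∀ g, c g ∈ P.F n) ∧ x = ∑ g ∈ Gs, g * c g := by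
  obtain ⟨E, hE, hE'⟩ := upper_fg (P.ini J)
  have : ∀ v, ∃ f, v ∈ E → f ∈ J ∧ f - P.m v ∈ P.B v := by
    intro v
    by_cases hv : v ∈ E
    · obtain ⟨f, h1, h2⟩ := hE v hv
      exact ⟨f, fun _ => ⟨h1, h2⟩⟩
    · exact ⟨0, fun h => absurd h hv⟩
  choose f hf using this
  refine ⟨E.image f, ?_, ?_⟩
  · intro g hg
    obtain ⟨v, hv, rfl⟩ := Finset.mem_image.1 hg
    exact (hf v hv).1
  have key_step : ∀ w x, x ∈ J → ∀ a : K, a ≠ 0 → x - a • P.m w ∈ P.B w →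
      ∃ c : R → R, (∀ g, c g ∈ P.F (deg w)) ∧ x = ∑ g ∈ E.image f, g * c g := by
    intro w
    induction hk : key w using WellFoundedLT.induction generalizing w with
    | _ k ih =>
    intro x hx a ha hxa
    subst hk
    have hw := P.ini_of_lead hx ha hxa
    obtain ⟨g, hg, hgw⟩ := hE' w hw
    obtain ⟨hgJ, hgB⟩ := hf g hg
    obtain ⟨c, hc, h⟩ := P.mul_lead hgB (w - g)
    rw [add_tsub_cancel_of_le hgw] at h
    set y := x - (a * c⁻¹) • (f g * P.m (w - g)) with hy
    have hyJ : y ∈ J := sub_mem hx (smul_mem _ _ (hJ _ hgJ _))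
    have hyB : y ∈ P.B w := by
      have := sub_mem hxa (smul_mem _ (a * c⁻¹) h)
      have e : x - a • P.m w - (a * c⁻¹) • (f g * P.m (w - g) - c • P.m w) = y := by
        rw [hy, smul_sub, smul_smul, mul_assoc, inv_mul_cancel₀ hc, mul_one]
        abel
      rwa [e] at this
    have hyc : ∃ c : R → R, (∀ g, c g ∈ P.F (deg w)) ∧ y = ∑ g ∈ E.image f, g * c g := by
      rcases P.lead hyB with h0 | ⟨v, hv, a', ha', hv'⟩
      · exact ⟨0, fun _ => zero_mem _, by simp [h0]⟩
      · obtain ⟨c, hc1, hc2⟩ := ih (key v) hv v rfl y hyJ a' ha'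
          (P.sp_mono (fun u hu => hu.2) hv')
        exact ⟨c, fun g => P.F_mono (deg_le_of_key_le (le_of_lt hv)) (hc1 g), hc2⟩
    obtain ⟨d, hd1, hd2⟩ := hyc
    refine ⟨d + Pi.single (f g) ((a * c⁻¹) • P.m (w - g)), ?_, ?_⟩
    · intro r
      refine add_mem (hd1 r) ?_
      by_cases hr : r = f g
      · subst hr
        rw [Pi.single_eq_same]
        refine smul_mem _ _ (P.m_mem ?_)
        exact deg_mono (tsub_le_self)
      · rw [Pi.single_eq_of_ne hr]; exact zero_mem _
    · simp only [Pi.add_apply, mul_add, Finset.sum_add_distrib]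
      rw [← hd2, Finset.sum_eq_single (f g)]
      · rw [Pi.single_eq_same, mul_smul_comm, hy]; abel
      · intro r _ hr
        rw [Pi.single_eq_of_ne hr, mul_zero]
      · intro h; exact absurd (Finset.mem_image_of_mem f hg) h
  intro n x hx hn
  rcases P.lead hn with h0 | ⟨v, hv, a', ha', hv'⟩
  · exact ⟨0, fun _ => zero_mem _, by simp [h0]⟩
  · obtain ⟨c, hc1, hc2⟩ := key_step v x hx a' ha' (P.sp_mono (fun u hu => hu.2) hv')
    exact ⟨c, fun g => P.F_mono hv (hc1 g), hc2⟩

end PBW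
end DUA

namespace DUA

open Classical Submodule Module

section LA
variable {K M N : Type} [Field K] [AddCommGroup M] [Module K M] [AddCommGroup N] [Module K N]

lemma rank_null (φ : M →ₗ[K] N) (X : Submodule K M) [FiniteDimensional K X] :
    finrank K (X.map φ) + finrank K (X ⊓ LinearMap.ker φ : Submodule K M) = finrank K X := by
  have h := LinearMap.finrank_range_add_finrank_ker (φ.domRestrict X)
  rw [LinearMap.range_domRestrict] at h
  rw [← h]
  congr 1
  have e : (X ⊓ LinearMap.ker φ : Submodule K M) = (LinearMap.ker (φ.domRestrict X)).map X.subtype := by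
    rw [LinearMap.ker_domRestrict]
    ext x; simp
  rw [e]
  exact LinearEquiv.finrank_eq (Submodule.equivSubtypeMap X _).symm

/-- dimension of the image of `X` modulo `J` -/
def hh (J X : Submodule K M) : ℕ := finrank K (X.map J.mkQ)

lemma hh_add (J X : Submodule K M) [FiniteDimensional K X] :
    hh J X + finrank K (X ⊓ J : Submodule K M) = finrank K X := by
  have := rank_null J.mkQ X
  rwa [ker_mkQ] at this

lemma hh_split {Q W : Submodule K M} (h : Q ≤ W) (X : Submodule K M) [FiniteDimensional K X] :
    hh Q X = hh W X + hh Q (X ⊓ W) := by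
  have h1 := hh_add Q X
  have h2 := hh_add W X
  have h3 := hh_add Q (X ⊓ W)
  have e : X ⊓ W ⊓ Q = X ⊓ Q := by rw [inf_assoc, inf_eq_right.2 h]
  rw [e] at h3
  omega

lemma hh_mono (J : Submodule K M) {X Y : Submodule K M} [FiniteDimensional K Y] (h : X ≤ Y ⊔ J) :
    hh J X ≤ hh J Y := by
  have : X.map J.mkQ ≤ Y.map J.mkQ := by
    refine (map_mono h).trans ?_
    rw [Submodule.map_sup, mkQ_map_self, sup_bot_eq]
  exact finrank_mono this

lemma hh_le_of_inj (φ : M →ₗ[K] M) {P Q X Y : Submodule K M} [FiniteDimensional K X]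
    [FiniteDimensional K Y] (h : X.map φ ≤ Y) (h' : ∀ x ∈ X, φ x ∈ Q → x ∈ P) : hh P X ≤ hh Q Y := by
  refine le_trans ?_ (hh_mono Q (h.trans le_sup_left))
  have h1 := rank_null (Q.mkQ ∘ₗ φ) X
  have h2 := hh_add P X
  have h3 : X ⊓ LinearMap.ker (Q.mkQ ∘ₗ φ) ≤ X ⊓ P := by
    rintro x ⟨hx, hx'⟩
    refine ⟨hx, h' x hx ?_⟩
    simpa using hx'
  have h4 := finrank_mono h3
  rw [map_comp] at h1
  unfold hh at *
  omega

lemma hh_map_le (φ : M →ₗ[K] M) {V Q : Submodule K M} (X : Submodule K M) [FiniteDimensional K X]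
    (h : ∀ x ∈ V, φ x ∈ Q) : hh Q (X.map φ) ≤ hh V X := by
  have h1 := rank_null (Q.mkQ ∘ₗ φ) X
  have h2 := hh_add V X
  have h3 : X ⊓ V ≤ X ⊓ LinearMap.ker (Q.mkQ ∘ₗ φ) := by
    rintro x ⟨hx, hx'⟩
    refine ⟨hx, ?_⟩
    simpa using h x hx'
  have h4 := finrank_mono h3
  rw [map_comp] at h1
  unfold hh at *
  omega

lemma hh_anti {J J' : Submodule K M} (h : J ≤ J') (X : Submodule K M) [FiniteDimensional K X] :
    hh J' X ≤ hh J X := by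
  have := hh_map_le LinearMap.id X (V := J) (Q := J') h
  simpa using this

lemma hh_sup_le (J : Submodule K M) {ι : Type} (s : Finset ι) (Y : ι → Submodule K M)
    [∀ i, FiniteDimensional K (Y i)] : hh J (s.sup Y) ≤ ∑ i ∈ s, hh J (Y i) := by
  induction s using Finset.induction_on with
  | empty => simp [hh]
  | insert a s ha ih =>
    rw [Finset.sup_insert, Finset.sum_insert ha]
    refine le_trans ?_ (add_le_add_right ih _)
    unfold hh
    rw [Submodule.map_sup]
    have := finrank_add_le_finrank_add_finrank ((Y a).map J.mkQ) ((s.sup Y).map J.mkQ)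
    exact this

lemma hh_eq_zero {J X : Submodule K M} [FiniteDimensional K X] (h : hh J X = 0) : X ≤ J := by
  have := Submodule.finrank_eq_zero.1 h
  rw [← ker_mkQ J]
  exact LinearMap.le_ker_iff_map.2 this

end LA

namespace PBW
variable {K R : Type} [Field K] [Ring R] [Algebra K R] (P : PBW K R)

lemma op_span (S : Set (Fin 3 → ℕ)) :
    span K ((fun v => MulOpposite.op (P.m v)) '' S) =
      (span K (P.m '' S)).map (MulOpposite.opLinearEquiv K : R ≃ₗ[K] Rᵐᵒᵖ).toLinearMap := by
  rw [map_span, ← Set.image_comp]; rfl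

/-- opposite structure -/
def op : PBW K Rᵐᵒᵖ where
  m v := MulOpposite.op (P.m v)
  g s := MulOpposite.op (P.g s)
  m_zero := by simp [P.m_zero]
  right v s := by
    obtain ⟨c, hc, h⟩ := P.left v s
    refine ⟨c, hc, ?_⟩
    rw [op_span]
    exact ⟨_, h, by simp⟩
  left v s := by
    obtain ⟨c, hc, h⟩ := P.right v s
    refine ⟨c, hc, ?_⟩
    rw [op_span]
    exact ⟨_, h, by simp⟩
  exh r := by
    obtain ⟨n, h⟩ := P.exh r.unop
    refine ⟨n, ?_⟩
    rw [op_span]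
    exact ⟨_, h, by simp⟩

lemma op_F (n : ℕ) (x : R) : MulOpposite.op x ∈ P.op.F n ↔ x ∈ P.F n := by
  have : P.op.F n = (P.F n).map (MulOpposite.opLinearEquiv K : R ≃ₗ[K] Rᵐᵒᵖ).toLinearMap :=
    P.op_span _
  rw [this]
  constructor
  · rintro ⟨y, hy, h⟩
    have : y = x := MulOpposite.op_injective h
    rwa [← this]
  · intro h
    exact ⟨x, h, rfl⟩

lemma groebner_left {J : Submodule K R} (hJ : ∀ x ∈ J, ∀ r, r * x ∈ J) :
    ∃ Gs : Finset R, (∀ g ∈ Gs, g ∈ J) ∧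
    ∀ n, ∀ x ∈ J, x ∈ P.F n → ∃ c : R → R, (∀ g, c g ∈ P.F n) ∧ x = ∑ g ∈ Gs, c g * g := by
  obtain ⟨Gs, h1, h2⟩ := P.op.groebner
    (J := J.comap (MulOpposite.opLinearEquiv K : R ≃ₗ[K] Rᵐᵒᵖ).symm.toLinearMap) (by
      intro x hx r
      exact hJ _ hx _)
  refine ⟨Gs.image MulOpposite.unop, ?_, ?_⟩
  · intro g hg
    obtain ⟨g', hg', rfl⟩ := Finset.mem_image.1 hg
    exact h1 g' hg'
  · intro n x hx hn
    obtain ⟨c, hc, hs⟩ := h2 n (MulOpposite.op x) hx ((P.op_F n x).2 hn)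
    refine ⟨fun g => (c (MulOpposite.op g)).unop, fun g => ?_, ?_⟩
    · rw [← P.op_F]; exact hc _
    · rw [Finset.sum_image (by intro a _ b _ h; exact MulOpposite.unop_injective h)]
      apply MulOpposite.op_injective
      rw [hs, Finset.op_sum]
      rfl

instance fd (n : ℕ) : FiniteDimensional K (P.F n) := by
  apply FiniteDimensional.span_of_finite
  exact (deg_finite 3 n).image _

/-- Hilbert function -/
def h (J : Submodule K R) (n : ℕ) : ℕ := hh J (P.F n)

lemma std_span (J : Submodule K R) (n : ℕ) :
    P.F n ≤ J ⊔ P.sp {v | deg v ≤ n ∧ v ∉ P.ini J} := by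
  have hm : ∀ v, deg v ≤ n → P.m v ∈ J ⊔ P.sp {v | deg v ≤ n ∧ v ∉ P.ini J} := by
    intro v
    induction hk : key v using WellFoundedLT.induction generalizing v with
    | _ k ih =>
    subst hk
    intro hv
    by_cases hi : v ∈ P.ini J
    · obtain ⟨f, hf, hB⟩ := hi
      have h1 : P.B v ≤ J ⊔ P.sp {v | deg v ≤ n ∧ v ∉ P.ini J} := by
        refine span_le.2 ?_
        rintro _ ⟨u, hu, rfl⟩
        exact ih (key u) hu u rfl ((deg_le_of_key_le (le_of_lt hu)).trans hv)
      have := sub_mem (mem_sup_left hf) (h1 hB)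
      rwa [sub_sub_cancel] at this
    · exact mem_sup_right (P.m_mem ⟨hv, hi⟩)
  refine span_le.2 ?_
  rintro _ ⟨u, hu, rfl⟩
  exact hm u hu

lemma h_std (J : Submodule K R) (n : ℕ) : P.h J n = cnt (P.ini J)ᶜ n := by
  set s := (ball 3 n).filter (· ∈ (P.ini J)ᶜ) with hs
  have hs' : ∀ v, v ∈ s ↔ deg v ≤ n ∧ v ∉ P.ini J := by
    intro v; simp [hs, mem_ball]
  have hmap : (P.F n).map J.mkQ = span K (Set.range (fun v : s => J.mkQ (P.m v))) := by
    apply le_antisymm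
    · refine (map_mono (P.std_span J n)).trans ?_
      rw [Submodule.map_sup, mkQ_map_self, bot_sup_eq, sp, map_span, ← Set.image_comp]
      apply span_mono
      rintro _ ⟨v, hv, rfl⟩
      exact ⟨⟨v, (hs' v).2 hv⟩, rfl⟩
    · refine span_le.2 ?_
      rintro _ ⟨v, rfl⟩
      exact mem_map_of_mem (P.m_mem ((hs' v).1 v.2).1)
  have hli : LinearIndepOn K (fun v => J.mkQ (P.m v)) (s : Set (Fin 3 → ℕ)) := by
    rw [linearIndepOn_iff]
    intro l hl h0
    by_contra hne
    obtain ⟨v, hv, hmax⟩ := Finset.exists_max_image l.support key (Finsupp.support_nonempty_iff.2 hne)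
    have hvs := (hs' v).1 (hl hv)
    apply hvs.2
    have hx : l.sum (fun v a => a • P.m v) ∈ J := by
      rw [← ker_mkQ J, LinearMap.mem_ker, Finsupp.sum, map_sum]
      simpa [Finsupp.linearCombination_apply, Finsupp.sum] using h0
    refine P.ini_of_lead hx (Finsupp.mem_support_iff.1 hv) ?_
    rw [Finsupp.sum, ← Finset.add_sum_erase _ _ hv, add_sub_cancel_left]
    refine sum_mem fun u hu => smul_mem _ _ (P.m_mem ?_)
    obtain ⟨hne, hu⟩ := Finset.mem_erase.1 hu
    exact lt_of_le_of_ne (hmax u hu) fun h => hne (key_inj h)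
  have hli' : LinearIndependent K (fun v : s => J.mkQ (P.m v)) := hli
  unfold h hh
  rw [hmap, finrank_span_eq_card hli', Fintype.card_coe]
  unfold cnt
  congr 1
  ext v
  rw [hs']
  simp [mem_ball]

lemma h_diff {J J' : Submodule K R} (hJ : J ≤ J') (n : ℕ) :
    P.h J n = P.h J' n + cnt (P.ini J' \ P.ini J) n := by
  rw [h_std, h_std]
  unfold cnt
  rw [← Finset.card_union_of_disjoint]
  · congr 1
    ext v
    simp only [Finset.mem_filter, Finset.mem_union, Set.mem_compl_iff, Set.mem_sdiff]
    have : v ∈ P.ini J → v ∈ P.ini J' := fun hv => P.ini_mono hJ hv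
    tauto
  · rw [Finset.disjoint_left]
    intro v hv hv'
    simp only [Finset.mem_filter, Set.mem_compl_iff, Set.mem_sdiff] at hv hv'
    exact hv.2 hv'.2.1

lemma h_split {J J' : Submodule K R} (hJ : J ≤ J') (n : ℕ) :
    P.h J n = P.h J' n + hh J (P.F n ⊓ J') := hh_split hJ _

lemma h_anti {J J' : Submodule K R} (hJ : J ≤ J') (n : ℕ) : P.h J' n ≤ P.h J n := hh_anti hJ _

lemma eq_of_h {J J' : Submodule K R} (hJ : J ≤ J') (hn : ∀ n, P.h J n ≤ P.h J' n) : J = J' := by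
  refine le_antisymm hJ fun x hx => ?_
  obtain ⟨n, hxn⟩ := P.exhF x
  have h1 := P.h_split hJ n
  have h2 := hn n
  have h3 : hh J (P.F n ⊓ J') = 0 := by omega
  exact hh_eq_zero h3 ⟨hxn, hx⟩

lemma eq_of_ini {J J' : Submodule K R} (hJ : J ≤ J') (hi : P.ini J = P.ini J') : J = J' := by
  refine P.eq_of_h hJ fun n => ?_
  rw [h_std, h_std, hi]

lemma right_wf (P : PBW K R) : WellFounded (fun J J' : {J : Submodule K R // IsR J} => J'.1 < J.1) := by
  rw [RelEmbedding.wellFounded_iff_isEmpty]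
  constructor
  intro f
  have hm : StrictMono (fun n => (f n).1) := strictMono_nat_of_lt_succ fun n =>
    f.map_rel_iff.2 (Nat.lt_succ_self n)
  obtain ⟨t0, ht⟩ := upper_acc (fun n => P.ini (f n).1)
    (fun a b hab => P.ini_mono (hm.monotone hab)) (fun n => P.ini_upper (f n).2)
  have h1 := ht (t0 + 1) (by omega)
  have h2 := P.eq_of_ini (hm.monotone (Nat.le_succ t0)) h1.symm
  exact (hm (Nat.lt_succ_self t0)).ne h2

end PBW
end DUA

namespace DUA

open Classical Submodule Module

namespace PBW
variable {K R : Type} [Field K] [Ring R] [Algebra K R] (P : PBW K R)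

/-- principal right ideal -/
def rid (K : Type) {R : Type} [Field K] [Ring R] [Algebra K R] (c : R) : Submodule K R :=
  LinearMap.range (LinearMap.mulLeft K c)

lemma mem_rid {c x : R} : x ∈ rid K c ↔ ∃ r, c * r = x := by
  simp [rid]

lemma mul_mem_rid (c r : R) : c * r ∈ rid K c := mem_rid.2 ⟨r, rfl⟩

lemma self_mem_rid (c : R) : c ∈ rid K c := mem_rid.2 ⟨1, mul_one c⟩

lemma isR_rid (c : R) : IsR (rid K c) := by
  intro x hx r
  obtain ⟨y, rfl⟩ := mem_rid.1 hx
  rw [mul_assoc]; exact mul_mem_rid _ _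

lemma rid_le {J : Submodule K R} (hJ : IsR J) {c : R} (hc : c ∈ J) : rid K c ≤ J := by
  intro x hx
  obtain ⟨y, rfl⟩ := mem_rid.1 hx
  exact hJ c hc y

lemma IsR.sup {J J' : Submodule K R} (hJ : IsR J) (hJ' : IsR J') : IsR (J ⊔ J') := by
  intro x hx r
  obtain ⟨a, ha, b, hb, rfl⟩ := mem_sup.1 hx
  rw [add_mul]
  exact add_mem (mem_sup_left (hJ a ha r)) (mem_sup_right (hJ' b hb r))

lemma IsR.inf {J J' : Submodule K R} (hJ : IsR J) (hJ' : IsR J') : IsR (J ⊓ J') :=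
  fun x hx r => ⟨hJ x hx.1 r, hJ' x hx.2 r⟩

lemma isR_top : IsR (⊤ : Submodule K R) := fun _ _ _ => trivial

lemma isR_bot : IsR (⊥ : Submodule K R) := by
  intro x hx r
  rw [(mem_bot K).1 hx, zero_mul]; exact zero_mem _

lemma sup_rid_add {T : Submodule K R} (hT : IsR T) (c : R) {t : R} (ht : t ∈ T) :
    T ⊔ rid K (c + t) = T ⊔ rid K c := by
  apply le_antisymm
  · refine sup_le le_sup_left (rid_le (hT.sup (isR_rid c)) ?_)
    exact add_mem (mem_sup_right (self_mem_rid c)) (mem_sup_left ht)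
  · refine sup_le le_sup_left (rid_le (hT.sup (isR_rid _)) ?_)
    have : c = (c + t) - t := by abel
    rw [this]
    refine sub_mem (mem_sup_right ?_) (mem_sup_left ht)
    rw [sub_add_cancel]
    exact self_mem_rid _

/-- `J` and `J'` agree up to growth `fb b` -/
def Gb (b : ℕ) (J J' : Submodule K R) : Prop := ∃ C, ∀ n, P.h J n ≤ P.h J' n + C * fb b n

variable {P}

lemma Gb.trans {b : ℕ} {J J' J'' : Submodule K R} (h1 : P.Gb b J J') (h2 : P.Gb b J' J'') :
    P.Gb b J J'' := by
  obtain ⟨C1, h1⟩ := h1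
  obtain ⟨C2, h2⟩ := h2
  refine ⟨C1 + C2, fun n => ?_⟩
  have := h1 n
  have := h2 n
  rw [add_mul]; omega

lemma Gb.refl (b : ℕ) (J : Submodule K R) : P.Gb b J J := ⟨0, fun n => by simp⟩

lemma Gb.mono {b : ℕ} {J J1 J2 J' : Submodule K R} (h : P.Gb b J J') (h1 : J ≤ J1) (h2 : J2 ≤ J') :
    P.Gb b J1 J2 := by
  obtain ⟨C, h⟩ := h
  exact ⟨C, fun n => (P.h_anti h1 n).trans ((h n).trans (Nat.add_le_add_right (P.h_anti h2 n) _))⟩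

lemma Gb.eq {J J' : Submodule K R} (h : P.Gb 0 J J') (hJ : J ≤ J') : J = J' := by
  obtain ⟨C, h⟩ := h
  exact P.eq_of_h hJ fun n => by simpa [fb] using h n

lemma Gb.dich (b : ℕ) {J J' : Submodule K R} (hJ : IsR J) (hJ' : IsR J') (hle : J ≤ J')
    (hn : ¬ P.Gb b J J') : ∃ a0, ∀ n k, 3 * n + a0 ≤ k → (n + 1) ^ b + P.h J' k ≤ P.h J k := by
  rcases dichotomy 3 b (P.ini J) (P.ini J') (P.ini_upper hJ) (P.ini_upper hJ') with ⟨C, h⟩ | ⟨a0, h⟩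
  · exact absurd ⟨C, fun n => by rw [P.h_diff hle]; exact Nat.add_le_add_left (h n) _⟩ hn
  · refine ⟨a0, fun n k hk => ?_⟩
    rw [P.h_diff hle, add_comm]
    exact Nat.add_le_add_left (h n k hk) _

lemma h_top (n : ℕ) : P.h ⊤ n = 0 := by
  have := hh_add (⊤ : Submodule K R) (P.F n)
  rw [inf_top_eq] at this
  unfold h; omega

lemma split (P : PBW K R) {S W : Submodule K R} (hS : IsR S) (hW : IsR W) :
    ∃ k, ∀ n, P.F n ⊓ (S ⊔ W) ≤ (P.F (n + k) ⊓ S) ⊔ W := by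
  obtain ⟨Gs, h1, h2⟩ := P.groebner (hS.sup hW)
  have : ∀ g, ∃ s w k, g ∈ Gs → s ∈ S ∧ w ∈ W ∧ s + w = g ∧ s ∈ P.F k := by
    intro g
    by_cases hg : g ∈ Gs
    · obtain ⟨s, hs, w, hw, h⟩ := mem_sup.1 (h1 g hg)
      obtain ⟨k, hk⟩ := P.exhF s
      exact ⟨s, w, k, fun _ => ⟨hs, hw, h, hk⟩⟩
    · exact ⟨0, 0, 0, fun h => absurd h hg⟩
  choose s w k hh using this
  refine ⟨Gs.sup k, fun n x hx => ?_⟩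
  obtain ⟨c, hc, rfl⟩ := h2 n x hx.2 hx.1
  refine sum_mem fun g hg => ?_
  obtain ⟨h3, h4, h5, h6⟩ := hh g hg
  have e : g * c g = s g * c g + w g * c g := by rw [← add_mul, h5]
  rw [e]
  refine add_mem (mem_sup_left ⟨?_, hS _ h3 _⟩) (mem_sup_right (hW _ h4 _))
  rw [add_comm]
  exact P.F_mul (P.F_mono (Finset.le_sup hg) h6) (hc g)

lemma Gb.tr {b : ℕ} {S W : Submodule K R} (hS : IsR S) (hW : IsR W) (h : P.Gb b (S ⊓ W) S) :
    P.Gb b W (S ⊔ W) := by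
  obtain ⟨C, hC⟩ := h
  obtain ⟨k, hk⟩ := P.split hS hW
  obtain ⟨C', hC'⟩ := fb_shift b k
  refine ⟨C * C', fun n => ?_⟩
  rw [P.h_split (le_sup_right : W ≤ S ⊔ W)]
  apply Nat.add_le_add_left
  have h1 : hh W (P.F n ⊓ (S ⊔ W)) ≤ hh W (P.F (n + k) ⊓ S) := hh_mono W (hk n)
  have h2 : hh W (P.F (n + k) ⊓ S) ≤ hh (S ⊓ W) (P.F (n + k) ⊓ S) := hh_anti inf_le_right _
  have h3 := P.h_split (inf_le_left : S ⊓ W ≤ S) (n + k)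
  have h4 := hC (n + k)
  have h5 := Nat.mul_le_mul_left C (hC' n)
  rw [mul_assoc]
  omega

lemma Gb.ii {b : ℕ} {V T Q : Submodule K R} (hT : IsR T) (hT' : ∀ x ∈ T, ∀ r, r * x ∈ T)
    (hQ : IsR Q) (hVT : ∀ v ∈ V, ∀ p ∈ T, v * p ∈ Q) (h : P.Gb b V ⊤) : P.Gb b Q (T ⊔ Q) := by
  obtain ⟨C, hC⟩ := h
  obtain ⟨k, hk⟩ := P.split hT hQ
  obtain ⟨C', hC'⟩ := fb_shift b k
  obtain ⟨Gs, h1, h2⟩ := P.groebner_left hT'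
  refine ⟨Gs.card * (C * C'), fun n => ?_⟩
  rw [P.h_split (le_sup_right : Q ≤ T ⊔ Q)]
  apply Nat.add_le_add_left
  have e1 : hh Q (P.F n ⊓ (T ⊔ Q)) ≤ hh Q (P.F (n + k) ⊓ T) := hh_mono Q (hk n)
  let Y : R → Submodule K R := fun g => (P.F (n + k)).map (LinearMap.mulRight K g)
  have hfd : ∀ g, FiniteDimensional K (Y g) := fun g => inferInstance
  have e2 : P.F (n + k) ⊓ T ≤ Gs.sup Y := by
    intro x hx
    obtain ⟨c, hc, rfl⟩ := h2 _ x hx.2 hx.1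
    refine sum_mem fun g hg => ?_
    exact (Finset.le_sup (f := Y) hg) ⟨c g, hc g, by simp⟩
  have hfd2 : FiniteDimensional K (Gs.sup Y : Submodule K R) :=
    Submodule.finiteDimensional_finset_sup Gs Y
  have e3 : hh Q (P.F (n + k) ⊓ T) ≤ hh Q (Gs.sup Y) := hh_mono Q (e2.trans le_sup_left)
  have e4 := hh_sup_le Q Gs Y
  have e5 : ∑ g ∈ Gs, hh Q (Y g) ≤ ∑ g ∈ Gs, C * (C' * fb b n) := by
    apply Finset.sum_le_sum
    intro g hg
    have := hh_map_le (LinearMap.mulRight K g) (V := V) (Q := Q) (P.F (n + k))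
      (fun v hv => by simpa using hVT v hv g (h1 g hg))
    refine this.trans ((hC (n + k)).trans ?_)
    rw [h_top, zero_add]
    exact Nat.mul_le_mul_left C (hC' n)
  rw [Finset.sum_const, smul_eq_mul] at e5
  calc _ ≤ _ := e1
    _ ≤ _ := e3
    _ ≤ _ := e4
    _ ≤ _ := e5
    _ = _ := by ring

end PBW
end DUA

namespace DUA

open Classical Submodule Module

lemma telescoping_false (f : ℕ → ℕ) (b C C' a0 k : ℕ) (hf : ∀ n, f n ≤ C' * (n + 1) ^ b)
    (hs : ∀ T n, 3 * T + a0 ≤ n + k → f n + (T + 1) ^ b ≤ f (n + k) + C * fb b n) : False := by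
  set A := 3 + a0 + k + 1 with hA
  set T := (C + C') * A ^ b + 1 with hT
  have htel : ∀ i, i ≤ T →
      i * (T + 1) ^ b ≤ f (3 * T + a0 + i * k) + i * (C * fb b (3 * T + a0 + T * k)) := by
    intro i
    induction i with
    | zero => intro _; simp
    | succ i ih =>
      intro hi
      have h1 := ih (by omega)
      have h2 := hs T (3 * T + a0 + i * k) (by omega)
      have h3 : fb b (3 * T + a0 + i * k) ≤ fb b (3 * T + a0 + T * k) :=
        fb_mono b (Nat.add_le_add_left (Nat.mul_le_mul_right k (by omega)) _)
      have h4 := Nat.mul_le_mul_left C h3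
      have e : 3 * T + a0 + (i + 1) * k = 3 * T + a0 + i * k + k := by ring
      rw [e, add_mul, add_mul, one_mul, one_mul]
      omega
  have h1 := htel T le_rfl
  have h2 := hf (3 * T + a0 + T * k)
  have h3 : T * fb b (3 * T + a0 + T * k) ≤ (3 * T + a0 + T * k + 1) ^ b := by
    cases b with
    | zero => simp [fb]
    | succ b =>
      simp only [fb]
      rw [pow_succ, mul_comm]
      apply Nat.mul_le_mul_left
      nlinarith [Nat.zero_le (T * k)]
  have h4 : 3 * T + a0 + T * k + 1 ≤ A * (T + 1) := by
    rw [hA]; nlinarith [Nat.zero_le (a0 * T)]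
  have h5 : (3 * T + a0 + T * k + 1) ^ b ≤ A ^ b * (T + 1) ^ b := by
    rw [← mul_pow]; exact Nat.pow_le_pow_left h4 b
  have h6 : T * (T + 1) ^ b ≤ (C + C') * A ^ b * (T + 1) ^ b := by
    have h7 := Nat.mul_le_mul_left C h3
    have h8 := Nat.mul_le_mul_left (C + C') h5
    have e : T * (C * fb b (3 * T + a0 + T * k)) = C * (T * fb b (3 * T + a0 + T * k)) := by ring
    rw [e] at h1
    rw [add_mul] at h8
    rw [← mul_assoc, add_mul C C'] at h8
    rw [add_mul C C']
    omega
  have h7 := Nat.le_of_mul_le_mul_right h6 (Nat.pow_pos (by omega))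
  omega

namespace PBW
variable {K R : Type} [Field K] [Ring R] [Algebra K R] {P : PBW K R}

lemma exists_critical {b : ℕ} {J N : Submodule K R} (hN : IsR N) (hJN : J < N)
    (hg : P.Gb (b + 1) J ⊤) :
    ∃ S, IsR S ∧ J < S ∧ S ≤ N ∧ ∀ S', IsR S' → J < S' → S' ≤ S → P.Gb b S' S := by
  by_contra hcon
  push Not at hcon
  obtain ⟨C, hC⟩ := hg
  have hchain : ∀ p : ℕ, ∃ S, IsR S ∧ J < S ∧ S ≤ N ∧
      ∃ a0, ∀ n k, 3 * n + a0 ≤ k → p * (n + 1) ^ b + P.h N k ≤ P.h S k := by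
    intro p
    induction p with
    | zero => exact ⟨N, hN, hJN, le_rfl, 0, fun n k _ => by simp⟩
    | succ p ih =>
      obtain ⟨S, hS, hJS, hSN, a0, ha0⟩ := ih
      obtain ⟨S', hS', hJS', hle, hng⟩ := hcon S hS hJS hSN
      obtain ⟨a1, ha1⟩ := Gb.dich b hS' hS hle hng
      refine ⟨S', hS', hJS', hle.trans hSN, a0 + a1, fun n k hk => ?_⟩
      have h1 := ha0 n k (by omega)
      have h2 := ha1 n k (by omega)
      rw [add_mul, one_mul]; omega
  obtain ⟨S, hS, hJS, hSN, a0, ha0⟩ := hchain (C * 4 ^ b + 1)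
  have h1 := ha0 a0 (3 * a0 + a0) le_rfl
  have h2 := P.h_anti hJS.le (3 * a0 + a0)
  have h3 := hC (3 * a0 + a0)
  rw [h_top] at h3
  have h4 : fb (b + 1) (3 * a0 + a0) ≤ 4 ^ b * (a0 + 1) ^ b := by
    simp only [fb]
    rw [← mul_pow]
    exact Nat.pow_le_pow_left (by omega) b
  have h5 := Nat.mul_le_mul_left C h4
  rw [← mul_assoc] at h5
  have h6 : 0 < (a0 + 1) ^ b := Nat.pow_pos (by omega)
  rw [add_mul, one_mul] at h1
  omega

lemma critical_false {b : ℕ} {J S : Submodule K R} (hJ : IsR J) (hS : IsR S) (hJS : J < S)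
    (hg : P.Gb (b + 1) J ⊤) (hng : ¬ P.Gb b J S) (c : R) (hV : P.Gb b (S ⊔ rid K c) ⊤)
    (hdisj : ∀ s ∈ S, S ⊓ (J ⊔ rid K (c + s)) ≤ J) : False := by
  have hL : ∀ l, c * l ∈ J → ∀ s ∈ S, s * l ∈ J := by
    intro l hl s hs
    refine hdisj s hs ⟨hS s hs l, ?_⟩
    have e : s * l = (c + s) * l - c * l := by rw [add_mul]; abel
    rw [e]
    exact sub_mem (mem_sup_right (mul_mem_rid _ _)) (mem_sup_left hl)
  let T : Submodule K R :=
    { carrier := {p | ∀ s ∈ S, s * p ∈ J}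
      add_mem' := fun {a b} ha hb s hs => by rw [mul_add]; exact add_mem (ha s hs) (hb s hs)
      zero_mem' := fun s _ => by rw [mul_zero]; exact zero_mem _
      smul_mem' := fun r x hx s hs => by rw [mul_smul_comm]; exact smul_mem _ _ (hx s hs) }
  have hT : IsR T := fun p hp r s hs => by rw [← mul_assoc]; exact hJ _ (hp s hs) r
  have hT' : ∀ p ∈ T, ∀ r, r * p ∈ T := fun p hp r s hs => by
    rw [← mul_assoc]; exact hp _ (hS s hs r)
  have hLT : ∀ l, c * l ∈ J → l ∈ T := fun l hl s hs => hL l hl s hs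
  set W := J ⊔ rid K c with hW
  set Q := T.map (LinearMap.mulLeft K c) ⊔ J with hQ
  have hQR : IsR Q := by
    refine IsR.sup ?_ hJ
    rintro _ ⟨p, hp, rfl⟩ r
    exact ⟨p * r, hT p hp r, by simp [mul_assoc]⟩
  have hJQ : J ≤ Q := le_sup_right
  have hQW : Q ≤ W := by
    refine sup_le ?_ le_sup_left
    rintro _ ⟨p, hp, rfl⟩
    exact mem_sup_right (mul_mem_rid c p)
  have hVT : ∀ v ∈ S ⊔ rid K c, ∀ p ∈ T, v * p ∈ Q := by
    intro v hv p hp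
    obtain ⟨s, hs, y, hy, rfl⟩ := mem_sup.1 hv
    obtain ⟨r, rfl⟩ := mem_rid.1 hy
    rw [add_mul]
    refine add_mem (hJQ (hp s hs)) (mem_sup_left ⟨r * p, hT' p hp r, by simp [mul_assoc]⟩)
  obtain ⟨C, hC⟩ := Gb.ii hT hT' hQR hVT hV
  obtain ⟨k, hk⟩ := P.exhF c
  obtain ⟨a0, ha0⟩ := Gb.dich b hJ hS hJS.le hng
  obtain ⟨C', hC'⟩ := hg
  refine telescoping_false (P.h J) b C C' a0 k ?_ ?_
  · intro n
    have := hC' n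
    rw [h_top, zero_add] at this
    exact this
  · intro t n ht
    have e1 : P.h T n ≤ hh Q (P.F (n + k) ⊓ W) := by
      refine hh_le_of_inj (LinearMap.mulLeft K c) ?_ ?_
      · rintro _ ⟨x, hx, rfl⟩
        refine ⟨?_, mem_sup_right (mul_mem_rid c x)⟩
        rw [add_comm]
        exact P.F_mul hk hx
      · intro x _ hx
        obtain ⟨y, ⟨p, hp, rfl⟩, j, hj, h⟩ := mem_sup.1 hx
        simp only [LinearMap.mulLeft_apply] at h
        have h1 : c * (x - p) ∈ J := by
          have : c * (x - p) = j := by rw [mul_sub, ← h]; abel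
          rwa [this]
        have := add_mem (hLT _ h1) hp
        rwa [sub_add_cancel] at this
    have e2 := P.h_split hQW (n + k)
    have e3 := P.h_split hJQ n
    have e4 := P.h_split hJQ (n + k)
    have e5 : hh J (P.F n ⊓ Q) ≤ hh J (P.F (n + k) ⊓ Q) :=
      hh_mono J ((inf_le_inf_right Q (P.F_mono (Nat.le_add_right n k))).trans le_sup_left)
    have e6 := hC n
    have e7 := P.h_anti (le_sup_left : T ≤ T ⊔ Q) n
    have e8 := P.h_split hJS.le (n + k)
    have e9 : hh J (P.F (n + k) ⊓ S) ≤ P.h W (n + k) := by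
      refine hh_le_of_inj LinearMap.id ?_ ?_
      · rw [map_id]; exact inf_le_left
      · intro x hx hxW
        have := hdisj 0 (zero_mem _)
        rw [add_zero] at this
        exact this ⟨hx.2, hxW⟩
    have e10 := ha0 t (n + k) ht
    omega

lemma slot (b : ℕ) {J : Submodule K R} (hJ : IsR J) (hg : P.Gb (b + 1) J ⊤) :
    ∀ (c : R) (N : Submodule K R), IsR N → J ≤ N → rid K c ⊔ N = ⊤ →
    ∃ n ∈ N, P.Gb b (J ⊔ rid K (c + n)) ⊤ := by
  have main : ∀ J : {J : Submodule K R // IsR J}, P.Gb (b + 1) J.1 ⊤ →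
      ∀ (c : R) (N : Submodule K R), IsR N → J.1 ≤ N → rid K c ⊔ N = ⊤ →
      ∃ n ∈ N, P.Gb b (J.1 ⊔ rid K (c + n)) ⊤ := by
    intro J
    induction J using P.right_wf.induction with
    | _ J ih =>
    obtain ⟨J, hJ⟩ := J
    intro hg c N hN hJN hc
    simp only at hg hJN ih ⊢
    by_cases hsat : ∃ T, IsR T ∧ J < T ∧ P.Gb b J T
    · obtain ⟨T, hT, hJT, hgT⟩ := hsat
      obtain ⟨n, hn, h1⟩ := ih ⟨T, hT⟩ hJT (hg.mono hJT.le le_rfl) c (N ⊔ T) (hN.sup hT)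
        le_sup_right (by rw [← sup_assoc, hc, top_sup_eq])
      obtain ⟨n0, hn0, j, hj, rfl⟩ := mem_sup.1 hn
      refine ⟨n0, hn0, ?_⟩
      rw [← add_assoc, sup_rid_add hT _ hj] at h1
      have h2 : P.Gb b (J ⊔ rid K (c + n0)) (T ⊔ (J ⊔ rid K (c + n0))) :=
        Gb.tr hT (hJ.sup (isR_rid _)) (hgT.mono (le_inf hJT.le le_sup_left) le_rfl)
      rw [← sup_assoc, sup_eq_left.2 hJT.le] at h2
      exact h2.trans h1
    · push Not at hsat
      rcases hJN.eq_or_lt with rfl | hlt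
      · refine ⟨0, zero_mem _, ?_⟩
        rw [add_zero, sup_comm, hc]
        exact Gb.refl b _
      obtain ⟨S, hS, hJS, hSN, hcrit⟩ := exists_critical hN hlt hg
      obtain ⟨n, hn, h1⟩ := ih ⟨S, hS⟩ hJS (hg.mono hJS.le le_rfl) c N hN hSN hc
      simp only at h1
      by_cases hdisj : ∀ s ∈ S, S ⊓ (J ⊔ rid K (c + n + s)) ≤ J
      · exact (critical_false hJ hS hJS hg (hsat S hS hJS) (c + n) h1 hdisj).elim
      · push Not at hdisj
        obtain ⟨s, hs, hne⟩ := hdisj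
        refine ⟨n + s, add_mem hn (hSN hs), ?_⟩
        have hWR : IsR (J ⊔ rid K (c + n + s)) := hJ.sup (isR_rid _)
        have hlt' : J < S ⊓ (J ⊔ rid K (c + n + s)) :=
          lt_of_le_not_ge (le_inf hJS.le le_sup_left) hne
        have h2 := Gb.tr hS hWR (hcrit _ (hS.inf hWR) hlt' inf_le_left)
        rw [← sup_assoc, sup_eq_left.2 hJS.le, sup_rid_add hS _ hs] at h2
        rw [← add_assoc]
        exact h2.trans h1
  exact main ⟨J, hJ⟩ hg

lemma mem_sup_rid {J : Submodule K R} {c x : R} (h : x ∈ J ⊔ rid K c) :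
    ∃ j ∈ J, ∃ r, x = j + c * r := by
  obtain ⟨j, hj, y, hy, rfl⟩ := mem_sup.1 h
  obtain ⟨r, rfl⟩ := mem_rid.1 hy
  exact ⟨j, hj, r, rfl⟩

lemma three_slot (b : ℕ) {J : Submodule K R} (hJ : IsR J) (hg : P.Gb (b + 3) J ⊤) (a₁ a₂ a₃ d : R)
    (htop : J ⊔ rid K a₁ ⊔ rid K a₂ ⊔ rid K a₃ ⊔ rid K d = ⊤) :
    ∃ r₁ r₂ r₃ : R,
      P.Gb b (J ⊔ rid K (a₁ + d * r₁) ⊔ rid K (a₂ + d * r₂) ⊔ rid K (a₃ + d * r₃)) ⊤ := by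
  obtain ⟨n1, hn1, h1⟩ := slot (b + 2) hJ hg a₁ (J ⊔ rid K a₂ ⊔ rid K a₃ ⊔ rid K d)
    (((hJ.sup (isR_rid _)).sup (isR_rid _)).sup (isR_rid _))
    (le_sup_left.trans (le_sup_left.trans le_sup_left))
    (by rw [← htop]; ac_rfl)
  obtain ⟨y1, hy1, r, rfl⟩ := mem_sup_rid hn1
  obtain ⟨y2, hy2, s, rfl⟩ := mem_sup_rid hy1
  obtain ⟨j, hj, t, rfl⟩ := mem_sup_rid hy2
  set b1 := a₁ + a₂ * t + a₃ * s + d * r with hb1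
  have e1 : a₁ + (j + a₂ * t + a₃ * s + d * r) = b1 + j := by rw [hb1]; abel
  rw [e1, sup_rid_add hJ _ hj] at h1
  have hJ1 : IsR (J ⊔ rid K b1) := hJ.sup (isR_rid _)
  have htop2 : rid K a₂ ⊔ (J ⊔ rid K b1 ⊔ rid K a₃ ⊔ rid K d) = ⊤ := by
    have hR : IsR (rid K a₂ ⊔ (J ⊔ rid K b1 ⊔ rid K a₃ ⊔ rid K d)) :=
      (isR_rid _).sup ((hJ1.sup (isR_rid _)).sup (isR_rid _))
    have m2 : ∀ x ∈ rid K a₂, x ∈ rid K a₂ ⊔ (J ⊔ rid K b1 ⊔ rid K a₃ ⊔ rid K d) :=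
      fun x hx => mem_sup_left hx
    have md : ∀ x ∈ rid K d, x ∈ rid K a₂ ⊔ (J ⊔ rid K b1 ⊔ rid K a₃ ⊔ rid K d) :=
      fun x hx => mem_sup_right (mem_sup_right hx)
    have m3 : ∀ x ∈ rid K a₃, x ∈ rid K a₂ ⊔ (J ⊔ rid K b1 ⊔ rid K a₃ ⊔ rid K d) :=
      fun x hx => mem_sup_right (mem_sup_left (mem_sup_right hx))
    have mb : ∀ x ∈ rid K b1, x ∈ rid K a₂ ⊔ (J ⊔ rid K b1 ⊔ rid K a₃ ⊔ rid K d) :=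
      fun x hx => mem_sup_right (mem_sup_left (mem_sup_left (mem_sup_right hx)))
    have mj : ∀ x ∈ J, x ∈ rid K a₂ ⊔ (J ⊔ rid K b1 ⊔ rid K a₃ ⊔ rid K d) :=
      fun x hx => mem_sup_right (mem_sup_left (mem_sup_left (mem_sup_left hx)))
    rw [eq_top_iff, ← htop]
    refine sup_le (sup_le (sup_le (sup_le mj (rid_le hR ?_)) m2) m3) md
    have e : a₁ = b1 - a₂ * t - a₃ * s - d * r := by rw [hb1]; abel
    rw [e]
    exact sub_mem (sub_mem (sub_mem (mb _ (self_mem_rid _)) (m2 _ (mul_mem_rid _ _)))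
      (m3 _ (mul_mem_rid _ _))) (md _ (mul_mem_rid _ _))
  obtain ⟨n2, hn2, h2⟩ := slot (b + 1) hJ1 h1 a₂ (J ⊔ rid K b1 ⊔ rid K a₃ ⊔ rid K d)
    ((hJ1.sup (isR_rid _)).sup (isR_rid _)) (le_sup_left.trans le_sup_left) htop2
  obtain ⟨y3, hy3, r', rfl⟩ := mem_sup_rid hn2
  obtain ⟨j1, hj1, s', rfl⟩ := mem_sup_rid hy3
  set b2 := a₂ + a₃ * s' + d * r' with hb2
  have e2 : a₂ + (j1 + a₃ * s' + d * r') = b2 + j1 := by rw [hb2]; abel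
  rw [e2, sup_rid_add hJ1 _ hj1] at h2
  have hJ2 : IsR (J ⊔ rid K b1 ⊔ rid K b2) := hJ1.sup (isR_rid _)
  have htop3 : rid K a₃ ⊔ (J ⊔ rid K b1 ⊔ rid K b2 ⊔ rid K d) = ⊤ := by
    have hR : IsR (rid K a₃ ⊔ (J ⊔ rid K b1 ⊔ rid K b2 ⊔ rid K d)) :=
      (isR_rid _).sup (hJ2.sup (isR_rid _))
    have m3 : ∀ x ∈ rid K a₃, x ∈ rid K a₃ ⊔ (J ⊔ rid K b1 ⊔ rid K b2 ⊔ rid K d) :=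
      fun x hx => mem_sup_left hx
    have md : ∀ x ∈ rid K d, x ∈ rid K a₃ ⊔ (J ⊔ rid K b1 ⊔ rid K b2 ⊔ rid K d) :=
      fun x hx => mem_sup_right (mem_sup_right hx)
    have mb2 : ∀ x ∈ rid K b2, x ∈ rid K a₃ ⊔ (J ⊔ rid K b1 ⊔ rid K b2 ⊔ rid K d) :=
      fun x hx => mem_sup_right (mem_sup_left (mem_sup_right hx))
    have mj : ∀ x ∈ J ⊔ rid K b1, x ∈ rid K a₃ ⊔ (J ⊔ rid K b1 ⊔ rid K b2 ⊔ rid K d) :=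
      fun x hx => mem_sup_right (mem_sup_left (mem_sup_left hx))
    rw [eq_top_iff, ← htop2]
    refine sup_le (rid_le hR ?_) (sup_le (sup_le mj m3) md)
    have e : a₂ = b2 - a₃ * s' - d * r' := by rw [hb2]; abel
    rw [e]
    exact sub_mem (sub_mem (mb2 _ (self_mem_rid _)) (m3 _ (mul_mem_rid _ _)))
      (md _ (mul_mem_rid _ _))
  obtain ⟨n3, hn3, h3⟩ := slot b hJ2 h2 a₃ (J ⊔ rid K b1 ⊔ rid K b2 ⊔ rid K d)
    (hJ2.sup (isR_rid _)) le_sup_left htop3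
  obtain ⟨j2, hj2, ρ₃, rfl⟩ := mem_sup_rid hn3
  have e3 : a₃ + (j2 + d * ρ₃) = a₃ + d * ρ₃ + j2 := by abel
  rw [e3, sup_rid_add hJ2 _ hj2] at h3
  refine ⟨r - (r' - ρ₃ * s') * t - ρ₃ * s, r' - ρ₃ * s', ρ₃, h3.mono ?_ le_rfl⟩
  set ρ₂ := r' - ρ₃ * s' with hρ₂
  set ρ₁ := r - ρ₂ * t - ρ₃ * s with hρ₁
  set J' := J ⊔ rid K (a₁ + d * ρ₁) ⊔ rid K (a₂ + d * ρ₂) ⊔ rid K (a₃ + d * ρ₃) with hJ'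
  have hR : IsR J' := ((hJ.sup (isR_rid _)).sup (isR_rid _)).sup (isR_rid _)
  have k3 : ∀ x ∈ rid K (a₃ + d * ρ₃), x ∈ J' := fun x hx => mem_sup_right hx
  have k2 : ∀ x ∈ rid K (a₂ + d * ρ₂), x ∈ J' := fun x hx => mem_sup_left (mem_sup_right hx)
  have k1 : ∀ x ∈ rid K (a₁ + d * ρ₁), x ∈ J' :=
    fun x hx => mem_sup_left (mem_sup_left (mem_sup_right hx))
  have kj : ∀ x ∈ J, x ∈ J' := fun x hx => mem_sup_left (mem_sup_left (mem_sup_left hx))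
  refine sup_le (sup_le (sup_le kj (rid_le hR ?_)) (rid_le hR ?_)) k3
  · have e : b1 = (a₁ + d * ρ₁) + (a₂ + d * ρ₂) * t + (a₃ + d * ρ₃) * s := by
      rw [hb1, hρ₁]; noncomm_ring
    rw [e]
    exact add_mem (add_mem (k1 _ (self_mem_rid _)) (k2 _ (mul_mem_rid _ _)))
      (k3 _ (mul_mem_rid _ _))
  · have e : b2 = (a₂ + d * ρ₂) + (a₃ + d * ρ₃) * s' := by
      rw [hb2, hρ₂]; noncomm_ring
    rw [e]
    exact add_mem (k2 _ (self_mem_rid _)) (k3 _ (mul_mem_rid _ _))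

end PBW
end DUA

namespace DUA

open Classical Submodule Module

/-- generators and relations -/
structure DUData (K A : Type) [Field K] [Ring A] [Algebra K A] (lam μ : K) where
  D : A
  U : A
  x : A
  hDU : D * U = lam • (U * D) + x
  hDx : D * x = μ • (x * D)
  hxU : x * U = μ • (U * x)
  hgen : Algebra.adjoin K {D, U} = ⊤
  hlam : lam ≠ 0
  hμ : μ ≠ 0

/-- coefficients -/
def cc {K : Type} [Field K] (lam μ : K) : ℕ → K
  | 0 => 0
  | k + 1 => lam ^ k + μ * cc lam μ k

lemma cc_eq {K : Type} [Field K] (lam μ : K) (k : ℕ) :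
    (lam - μ) * cc lam μ k = lam ^ k - μ ^ k := by
  induction k with
  | zero => simp [cc]
  | succ k ih =>
    simp only [cc]
    linear_combination μ * ih

namespace DUData
variable {K A : Type} [Field K] [Ring A] [Algebra K A] {lam μ : K} (T : DUData K A lam μ)

lemma Dxj (j : ℕ) : T.D * T.x ^ j = μ ^ j • (T.x ^ j * T.D) := by
  induction j with
  | zero => simp
  | succ j ih =>
    rw [pow_succ, ← mul_assoc, ih, smul_mul_assoc, mul_assoc, T.hDx, mul_smul_comm, smul_smul,
      ← pow_succ, mul_assoc]

lemma xjU (j : ℕ) : T.x ^ j * T.U = μ ^ j • (T.U * T.x ^ j) := by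
  induction j with
  | zero => simp
  | succ j ih =>
    rw [pow_succ', mul_assoc, ih, mul_smul_comm, ← mul_assoc, T.hxU, smul_mul_assoc, smul_smul,
      ← pow_succ, mul_assoc]

lemma Dkx (k : ℕ) : T.D ^ k * T.x = μ ^ k • (T.x * T.D ^ k) := by
  induction k with
  | zero => simp
  | succ k ih =>
    rw [pow_succ', mul_assoc, ih, mul_smul_comm, ← mul_assoc, T.hDx, smul_mul_assoc, smul_smul,
      ← pow_succ, mul_assoc]

lemma xUi (i : ℕ) : T.x * T.U ^ i = μ ^ i • (T.U ^ i * T.x) := by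
  induction i with
  | zero => simp
  | succ i ih =>
    rw [pow_succ, ← mul_assoc, ih, smul_mul_assoc, mul_assoc, T.hxU, mul_smul_comm, smul_smul,
      ← pow_succ, mul_assoc]

lemma DkU (k : ℕ) : T.D ^ (k + 1) * T.U =
    lam ^ (k + 1) • (T.U * T.D ^ (k + 1)) + cc lam μ (k + 1) • (T.x * T.D ^ k) := by
  induction k with
  | zero => simp [cc, T.hDU]
  | succ k ih =>
    rw [pow_succ' T.D (k + 1), mul_assoc, ih, mul_add, mul_smul_comm, mul_smul_comm, ← mul_assoc,
      ← mul_assoc, T.hDU, T.hDx]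
    simp only [add_mul, smul_mul_assoc, smul_add, smul_smul, mul_assoc, ← pow_succ', ← pow_succ]
    conv_rhs => rw [cc, add_smul]
    rw [mul_comm (cc lam μ (k + 1)) μ]
    abel

lemma DUi (i : ℕ) : T.D * T.U ^ (i + 1) =
    lam ^ (i + 1) • (T.U ^ (i + 1) * T.D) + cc lam μ (i + 1) • (T.U ^ i * T.x) := by
  induction i with
  | zero => simp [cc, T.hDU]
  | succ i ih =>
    rw [pow_succ T.U (i + 1), ← mul_assoc, ih, add_mul, smul_mul_assoc, smul_mul_assoc, mul_assoc,
      mul_assoc, T.hDU, T.hxU]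
    simp only [mul_add, mul_smul_comm, smul_add, smul_smul, ← mul_assoc, ← pow_succ]
    conv_rhs => rw [cc, add_smul]
    rw [mul_comm (cc lam μ (i + 1)) μ]
    abel

/-- monomials -/
def mon (v : Fin 3 → ℕ) : A := T.U ^ (v 0) * T.x ^ (v 1) * T.D ^ (v 2)

lemma mon_mk (i j k : ℕ) : T.mon ![i, j, k] = T.U ^ i * T.x ^ j * T.D ^ k := rfl

lemma vec_eq (v : Fin 3 → ℕ) : ∃ i j k, v = ![i, j, k] :=
  ⟨v 0, v 1, v 2, by ext i; fin_cases i <;> rfl⟩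

lemma ev0 (i j k : ℕ) : ![i, j, k] + ev 0 = ![i + 1, j, k] := by
  ext s; fin_cases s <;> simp [ev]

lemma ev1 (i j k : ℕ) : ![i, j, k] + ev 1 = ![i, j + 1, k] := by
  ext s; fin_cases s <;> simp [ev]

lemma ev2 (i j k : ℕ) : ![i, j, k] + ev 2 = ![i, j, k + 1] := by
  ext s; fin_cases s <;> simp [ev]

lemma deg_mk (i j k : ℕ) : deg ![i, j, k] = i + j + k := by
  simp [deg, Fin.sum_univ_three]

/-- generator list -/
def gen : Fin 3 → A := ![T.U, T.x, T.D]

lemma mon_right (v : Fin 3 → ℕ) (s : Fin 3) : ∃ c : K, c ≠ 0 ∧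
    T.mon v * T.gen s - c • T.mon (v + ev s) ∈ span K (T.mon '' {u | deg u < deg v + 1}) := by
  obtain ⟨i, j, k, rfl⟩ := vec_eq v
  have hl := T.hlam
  have hm := T.hμ
  fin_cases s
  · refine ⟨μ ^ j * lam ^ k, mul_ne_zero (pow_ne_zero _ hm) (pow_ne_zero _ hl), ?_⟩
    simp only [Fin.zero_eta, gen, Matrix.cons_val_zero, ev0, mon_mk]
    cases k with
    | zero =>
      have e : T.U ^ i * T.x ^ j * T.D ^ 0 * T.U = (μ ^ j * lam ^ 0) • (T.U ^ (i + 1) * T.x ^ j * T.D ^ 0) := by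
        simp only [pow_zero, mul_one]
        rw [mul_assoc, T.xjU, mul_smul_comm, ← mul_assoc, ← pow_succ]
      rw [e, sub_self]; exact zero_mem _
    | succ k =>
      have e : T.U ^ i * T.x ^ j * T.D ^ (k + 1) * T.U
          = (μ ^ j * lam ^ (k + 1)) • (T.U ^ (i + 1) * T.x ^ j * T.D ^ (k + 1))
            + cc lam μ (k + 1) • T.mon ![i, j + 1, k] := by
        rw [mul_assoc, T.DkU, mul_add, mul_smul_comm, mul_smul_comm, mon_mk]
        congr 1
        · rw [← mul_assoc, mul_assoc (T.U ^ i), T.xjU, mul_smul_comm, smul_mul_assoc, smul_smul,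
            ← mul_assoc, ← pow_succ, mul_comm]
        · rw [← mul_assoc, mul_assoc (T.U ^ i), ← pow_succ]
      rw [e, add_sub_cancel_left]
      refine smul_mem _ _ (subset_span ⟨_, ?_, rfl⟩)
      show deg _ < deg _ + 1
      rw [deg_mk, deg_mk]; omega
  · refine ⟨μ ^ k, pow_ne_zero _ hm, ?_⟩
    have e : T.mon ![i, j, k] * T.gen 1 = μ ^ k • T.mon (![i, j, k] + ev 1) := by
      simp only [gen, ev1, mon_mk]
      show T.U ^ i * T.x ^ j * T.D ^ k * T.x = _
      rw [mul_assoc, T.Dkx, mul_smul_comm, ← mul_assoc, mul_assoc (T.U ^ i), ← pow_succ]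
    simp only [Fin.mk_one]
    rw [e, sub_self]; exact zero_mem _
  · refine ⟨1, one_ne_zero, ?_⟩
    have e : T.mon ![i, j, k] * T.gen 2 = T.mon (![i, j, k] + ev 2) := by
      simp only [gen, ev2, mon_mk]
      show T.U ^ i * T.x ^ j * T.D ^ k * T.D = _
      rw [mul_assoc, ← pow_succ]
    simp only [Fin.reduceFinMk]
    rw [e, one_smul, sub_self]; exact zero_mem _

lemma mon_left (v : Fin 3 → ℕ) (s : Fin 3) : ∃ c : K, c ≠ 0 ∧
    T.gen s * T.mon v - c • T.mon (v + ev s) ∈ span K (T.mon '' {u | deg u < deg v + 1}) := by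
  obtain ⟨i, j, k, rfl⟩ := vec_eq v
  have hl := T.hlam
  have hm := T.hμ
  fin_cases s
  · refine ⟨1, one_ne_zero, ?_⟩
    have e : T.gen 0 * T.mon ![i, j, k] = T.mon (![i, j, k] + ev 0) := by
      simp only [gen, ev0, mon_mk]
      show T.U * (T.U ^ i * T.x ^ j * T.D ^ k) = _
      rw [← mul_assoc, ← mul_assoc, ← pow_succ']
    simp only [Fin.zero_eta]
    rw [e, one_smul, sub_self]; exact zero_mem _
  · refine ⟨μ ^ i, pow_ne_zero _ hm, ?_⟩
    have e : T.gen 1 * T.mon ![i, j, k] = μ ^ i • T.mon (![i, j, k] + ev 1) := by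
      simp only [gen, ev1, mon_mk]
      show T.x * (T.U ^ i * T.x ^ j * T.D ^ k) = _
      rw [← mul_assoc, ← mul_assoc, T.xUi, smul_mul_assoc, smul_mul_assoc, mul_assoc (T.U ^ i),
        ← pow_succ']
    simp only [Fin.mk_one]
    rw [e, sub_self]; exact zero_mem _
  · refine ⟨lam ^ i * μ ^ j, mul_ne_zero (pow_ne_zero _ hl) (pow_ne_zero _ hm), ?_⟩
    simp only [Fin.reduceFinMk, ev2]
    have eg : T.gen 2 = T.D := rfl
    rw [eg, mon_mk, mon_mk]
    cases i with
    | zero =>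
      have e : T.D * (T.U ^ 0 * T.x ^ j * T.D ^ k) = (lam ^ 0 * μ ^ j) • (T.U ^ 0 * T.x ^ j * T.D ^ (k + 1)) := by
        simp only [pow_zero, one_mul]
        rw [← mul_assoc, T.Dxj, smul_mul_assoc, mul_assoc, ← pow_succ']
      rw [e, sub_self]; exact zero_mem _
    | succ i =>
      have e : T.D * (T.U ^ (i + 1) * T.x ^ j * T.D ^ k)
          = (lam ^ (i + 1) * μ ^ j) • (T.U ^ (i + 1) * T.x ^ j * T.D ^ (k + 1))
            + cc lam μ (i + 1) • T.mon ![i, j + 1, k] := by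
        rw [mul_assoc (T.U ^ (i + 1)), ← mul_assoc, T.DUi, add_mul, smul_mul_assoc, smul_mul_assoc, mon_mk]
        congr 1
        · rw [mul_assoc, ← mul_assoc T.D, T.Dxj, smul_mul_assoc, mul_smul_comm, smul_smul,
            mul_assoc (T.x ^ j), ← pow_succ', mul_assoc]
        · rw [← mul_assoc, mul_assoc (T.U ^ i), ← pow_succ']
      rw [e, add_sub_cancel_left]
      refine smul_mem _ _ (subset_span ⟨_, ?_, rfl⟩)
      show deg _ < deg _ + 1
      rw [deg_mk, deg_mk]; omega

lemma mon_exh (r : A) : ∃ n, r ∈ span K (T.mon '' {u | deg u < n}) := by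
  have hmono : ∀ a b : ℕ, a ≤ b → span K (T.mon '' {u | deg u < a}) ≤ span K (T.mon '' {u | deg u < b}) :=
    fun a b hab => span_mono (Set.image_mono fun u hu => lt_of_lt_of_le hu hab)
  have hg : ∀ s n y, y ∈ span K (T.mon '' {u | deg u < n}) →
      y * T.gen s ∈ span K (T.mon '' {u | deg u < n + 1}) := by
    intro s n y hy
    have hle : span K (T.mon '' {u | deg u < n}) ≤
        (span K (T.mon '' {u | deg u < n + 1})).comap (LinearMap.mulRight K (T.gen s)) := by
      refine span_le.2 ?_
      rintro _ ⟨v, hv, rfl⟩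
      obtain ⟨c, _, h⟩ := T.mon_right v s
      have hv' : deg v < n := hv
      have h2 : c • T.mon (v + ev s) ∈ span K (T.mon '' {u | deg u < n + 1}) :=
        smul_mem _ _ (subset_span ⟨_, by show deg _ < _; rw [deg_add_ev]; omega, rfl⟩)
      have := add_mem (hmono _ _ (by omega) h) h2
      simpa using this
    exact hle hy
  have key : ∀ r ∈ Algebra.adjoin K {T.D, T.U}, ∀ y, (∃ n, y ∈ span K (T.mon '' {u | deg u < n})) →
      ∃ n, y * r ∈ span K (T.mon '' {u | deg u < n}) := by
    intro r hr
    induction hr using Algebra.adjoin_induction with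
    | mem r hr =>
      rintro y ⟨n, hy⟩
      rcases hr with rfl | rfl
      · exact ⟨n + 1, hg 2 n y hy⟩
      · exact ⟨n + 1, hg 0 n y hy⟩
    | algebraMap c =>
      rintro y ⟨n, hy⟩
      refine ⟨n, ?_⟩
      rw [← Algebra.commutes, ← Algebra.smul_def]
      exact smul_mem _ _ hy
    | add a b _ _ ha hb =>
      intro y hy
      obtain ⟨n1, h1⟩ := ha y hy
      obtain ⟨n2, h2⟩ := hb y hy
      refine ⟨max n1 n2, ?_⟩
      rw [mul_add]
      exact add_mem (hmono _ _ (le_max_left _ _) h1) (hmono _ _ (le_max_right _ _) h2)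
    | mul a b _ _ ha hb =>
      intro y hy
      rw [← mul_assoc]
      exact hb _ (ha y hy)
  have h1 := key r (by rw [T.hgen]; trivial) 1 ⟨1, subset_span ⟨0, by simp [deg], by simp [mon]⟩⟩
  rwa [one_mul] at h1

/-- the filtered structure -/
def pbw : PBW K A where
  m := T.mon
  g := T.gen
  m_zero := by simp [mon]
  right := T.mon_right
  left := T.mon_left
  exh := T.mon_exh

lemma Gb_bot : T.pbw.Gb 4 ⊥ ⊤ := by
  refine ⟨1, fun n => ?_⟩
  rw [PBW.h_std, PBW.h_top, zero_add, one_mul]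
  have : cnt (T.pbw.ini ⊥)ᶜ n ≤ (Fintype.piFinset (fun _ : Fin 3 => Finset.range (n + 1))).card := by
    apply Finset.card_le_card
    intro v hv
    simp only [Finset.mem_filter, mem_ball] at hv
    rw [Fintype.mem_piFinset]
    intro i
    have := le_deg v i
    exact Finset.mem_range.2 (by omega)
  simpa [fb] using this

lemma Gb_xy (hne : lam ≠ μ) : T.pbw.Gb 3 (PBW.rid K (T.x * (T.x + (lam - μ) • (T.U * T.D)))) ⊤ := by
  set z := T.x * (T.x + (lam - μ) • (T.U * T.D)) with hz
  have hini : ![1, 1, 1] ∈ T.pbw.ini (PBW.rid K z) := by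
    refine T.pbw.ini_of_lead (PBW.self_mem_rid z) (mul_ne_zero (sub_ne_zero.2 hne) T.hμ) ?_
    have e : z - ((lam - μ) * μ) • T.pbw.m ![1, 1, 1] = T.pbw.m ![0, 2, 0] := by
      show z - ((lam - μ) * μ) • T.mon ![1, 1, 1] = T.mon ![0, 2, 0]
      rw [mon_mk, mon_mk, hz, mul_add, mul_smul_comm, ← mul_assoc, T.hxU, smul_mul_assoc, smul_smul]
      simp [pow_two]
    rw [e]
    refine T.pbw.m_mem ?_
    apply key_lt_of_deg_lt
    rw [deg_mk, deg_mk]; omega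
  have hup := T.pbw.ini_upper (PBW.isR_rid (K := K) z)
  refine ⟨3, fun n => ?_⟩
  rw [PBW.h_std, PBW.h_top, zero_add]
  let Y : Fin 3 → Finset (Fin 3 → ℕ) := fun s =>
    Fintype.piFinset (fun i : Fin 3 => if i = s then {0} else Finset.range (n + 1))
  have hsub : cnt (T.pbw.ini (PBW.rid K z))ᶜ n ≤ (Finset.univ.biUnion Y).card := by
    apply Finset.card_le_card
    intro v hv
    simp only [Finset.mem_filter, mem_ball] at hv
    have : ∃ s, v s = 0 := by
      by_contra hcon
      push Not at hcon
      refine hv.2 (hup ?_ hini)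
      intro i
      have e : (![1, 1, 1] : Fin 3 → ℕ) i = 1 := by fin_cases i <;> rfl
      rw [e]
      exact Nat.one_le_iff_ne_zero.2 (hcon i)
    obtain ⟨s, hs⟩ := this
    simp only [Finset.mem_biUnion, Finset.mem_univ, true_and]
    refine ⟨s, Fintype.mem_piFinset.2 fun i => ?_⟩
    by_cases hi : i = s
    · subst hi; simp [hs]
    · rw [if_neg hi]
      have := le_deg v i
      exact Finset.mem_range.2 (by omega)
  refine hsub.trans (Finset.card_biUnion_le.trans ?_)
  have hY : ∀ s, (Y s).card = (n + 1) ^ 2 := by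
    intro s
    simp only [Y, Fintype.card_piFinset, Fin.prod_univ_three]
    fin_cases s <;> simp [pow_two]
  simp [hY, fb]

end DUData
end DUA

namespace DUA

open Classical Submodule Module

lemma pow_inj_of {K : Type} [Field K] {q : K} (h0 : q ≠ 0) (hq : ∀ n : ℕ, 0 < n → q ^ n ≠ 1) :
    Function.Injective (fun n : ℕ => q ^ n) := by
  have aux : ∀ i j : ℕ, i < j → q ^ i ≠ q ^ j := by
    intro i j hij h
    apply hq (j - i) (by omega)
    have e : q ^ j = q ^ (j - i) * q ^ i := by rw [← pow_add]; congr 1; omega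
    rw [e] at h
    have := pow_ne_zero i h0
    exact mul_right_cancel₀ this (by rw [← h, one_mul])
  intro i j h
  rcases lt_trichotomy i j with h1 | h1 | h1
  · exact absurd h (aux i j h1)
  · exact h1
  · exact absurd h.symm (aux j i h1)

lemma vanish {K M : Type} [Field K] [IsAlgClosed K] [AddCommGroup M] [Module K M]
    [FiniteDimensional K M] {lam μ : K} (hl : lam ≠ 0) (hm : μ ≠ 0) (hne : lam ≠ μ)
    (hru : ∀ n : ℕ, 0 < n → (lam / μ) ^ n ≠ 1) (D U X Y : End K M)
    (h1 : U * D = lam • (D * U) + X) (h2 : Y = X + (lam - μ) • (D * U))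
    (h3 : X * D = μ • (D * X)) (h4 : U * X = μ • (X * U))
    (hsurj : Function.Surjective (Y * X)) : Subsingleton M := by
  by_contra hns
  rw [not_subsingleton_iff_nontrivial] at hns
  have h5 : (lam - μ) • (U * D) = lam • Y - μ • X := by
    rw [h1, h2]; module
  have h6 : Y * D = lam • (D * Y) := by
    have : Y * D = X * D + D * ((lam - μ) • (U * D)) := by
      rw [h2, add_mul, smul_mul_assoc, mul_smul_comm, mul_assoc]
    rw [this, h5, h3, mul_sub, mul_smul_comm, mul_smul_comm]; module
  have h7 : U * Y = lam • (Y * U) := by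
    have : U * Y = U * X + ((lam - μ) • (U * D)) * U := by
      rw [h2, mul_add, smul_mul_assoc, mul_smul_comm, mul_assoc]
    rw [this, h5, h4, sub_mul, smul_mul_assoc, smul_mul_assoc]; module
  have h8 : X * Y = Y * X := by
    have e : X * (D * U) = (D * U) * X := by
      rw [← mul_assoc, h3, mul_assoc, h4, smul_mul_assoc, mul_smul_comm, mul_assoc]
    rw [h2, mul_add, add_mul, mul_smul_comm, smul_mul_assoc, e]
  have hYs : Function.Surjective Y := fun m => by
    obtain ⟨n, hn⟩ := hsurj m; exact ⟨X n, hn⟩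
  have hXs : Function.Surjective X := fun m => by
    rw [← h8] at hsurj
    obtain ⟨n, hn⟩ := hsurj m; exact ⟨Y n, hn⟩
  have hXi : Function.Injective X := LinearMap.injective_iff_surjective.2 hXs
  have hYi : Function.Injective Y := LinearMap.injective_iff_surjective.2 hYs
  have hdet : ∀ f : End K M, Function.Injective f → LinearMap.det f ≠ 0 := by
    intro f hf
    have : IsUnit f := (LinearMap.isUnit_iff_ker_eq_bot f).2 (LinearMap.ker_eq_bot.2 hf)
    exact (LinearMap.isUnit_det f this).ne_zero
  have hd : 0 < finrank K M := finrank_pos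
  have hUn : ¬ Function.Injective U := by
    intro hU
    have aux : ∀ (Z : End K M) (c : K), Function.Injective Z → U * Z = c • (Z * U) →
        c ^ finrank K M = 1 := by
      intro Z c hZ h
      have h' := congrArg LinearMap.det h
      rw [LinearMap.det_smul, map_mul, map_mul, mul_comm (LinearMap.det U)] at h'
      have hne := mul_ne_zero (hdet Z hZ) (hdet U hU)
      exact (mul_right_cancel₀ hne (by rw [one_mul]; exact h')).symm
    have a1 := aux X μ hXi h4
    have a2 := aux Y lam hYi h7
    exact hru _ hd (by rw [div_pow, a1, a2, div_one])
  have hker : LinearMap.ker U ≠ ⊥ := fun h => hUn (LinearMap.ker_eq_bot.1 h)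
  have hnt : Nontrivial (LinearMap.ker U) := Submodule.nontrivial_iff_ne_bot.2 hker
  have hst : ∀ m ∈ LinearMap.ker U, X m ∈ LinearMap.ker U := by
    intro m hm'
    have := LinearMap.congr_fun h4 m
    simp only [Module.End.mul_apply, LinearMap.smul_apply] at this
    rw [LinearMap.mem_ker, this, LinearMap.mem_ker.1 hm', map_zero, smul_zero]
  obtain ⟨a, ha⟩ := Module.End.exists_eigenvalue (X.restrict hst)
  obtain ⟨⟨m, hmU⟩, hm1, hm0⟩ := ha.exists_hasEigenvector
  have hm0' : m ≠ 0 := fun h => hm0 (Subtype.ext h)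
  have hXm : X m = a • m := by
    have := Module.End.mem_eigenspace_iff.1 hm1
    exact congrArg Subtype.val this
  have ha0 : a ≠ 0 := by
    intro h
    rw [h, zero_smul] at hXm
    exact hm0' (hXi (by rw [hXm, map_zero]))
  have hYm : Y m = a • m := by
    rw [h2]
    simp only [LinearMap.add_apply, LinearMap.smul_apply, Module.End.mul_apply]
    rw [LinearMap.mem_ker.1 hmU, map_zero, smul_zero, add_zero, hXm]
  have aux : ∀ (Z : End K M) (c : K), Z m = a • m → Z * D = c • (D * Z) →
      ∀ k : ℕ, Z ((D ^ k) m) = (c ^ k * a) • (D ^ k) m := by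
    intro Z c hZ h k
    induction k with
    | zero => simpa using hZ
    | succ k ih =>
      rw [pow_succ' D, Module.End.mul_apply, ← Module.End.mul_apply Z, h, LinearMap.smul_apply,
        Module.End.mul_apply, ih, map_smul, smul_smul, pow_succ]
      congr 1; ring
  have hXk := aux X μ hXm h3
  have hYk := aux Y lam hYm h6
  have hq0 : lam / μ ≠ 0 := div_ne_zero hl hm
  have hDk : ∀ k : ℕ, (D ^ k) m ≠ 0 := by
    intro k
    induction k with
    | zero => simpa using hm0'
    | succ k ih =>
      intro h
      have e := LinearMap.congr_fun h5 ((D ^ k) m)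
      simp only [LinearMap.smul_apply, LinearMap.sub_apply, Module.End.mul_apply] at e
      rw [← Module.End.mul_apply D, ← pow_succ', h, map_zero, smul_zero, hXk, hYk, smul_smul,
        smul_smul, ← sub_smul] at e
      rcases smul_eq_zero.1 e.symm with h' | h'
      · have e2 : (lam ^ (k + 1) - μ ^ (k + 1)) * a = 0 := by rw [← h']; ring
        rcases mul_eq_zero.1 e2 with h'' | h''
        · apply hru (k + 1) (by omega)
          rw [div_pow, sub_eq_zero.1 h'', div_self (pow_ne_zero _ hm)]
        · exact ha0 h''
      · exact ih h'
  let e := LinearEquiv.ofBijective X ⟨hXi, hXs⟩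
  let S : End K M := e.symm.toLinearMap * Y
  have hS : ∀ k : ℕ, S.HasEigenvector ((lam / μ) ^ k) ((D ^ k) m) := by
    intro k
    refine ⟨Module.End.mem_eigenspace_iff.2 ?_, hDk k⟩
    show e.symm (Y ((D ^ k) m)) = _
    rw [LinearEquiv.symm_apply_eq]
    show Y _ = X _
    rw [map_smul, hXk, hYk, smul_smul]
    congr 1
    rw [div_pow]
    have := pow_ne_zero k hm
    field_simp
  have hli := Module.End.eigenvectors_linearIndependent' S _ (pow_inj_of hq0 hru) _ hS
  have hfin := hli.finite
  exact not_finite ℕ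

namespace PBW
variable {K R : Type} [Field K] [Ring R] [Algebra K R] {P : PBW K R}

lemma finite_of_Gb {J : Submodule K R} (h : P.Gb 1 J ⊤) : FiniteDimensional K (R ⧸ J) := by
  obtain ⟨C, hC⟩ := h
  have hb : BddAbove (Set.range (P.h J)) := by
    refine ⟨C, ?_⟩
    rintro _ ⟨n, rfl⟩
    simpa [h_top, fb] using hC n
  obtain ⟨N, hN⟩ := Nat.sSup_mem (Set.range_nonempty (P.h J)) hb
  have hmax : ∀ n, P.h J n ≤ P.h J N := fun n => by
    rw [hN]; exact le_csSup hb ⟨n, rfl⟩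
  have htop : (P.F N).map J.mkQ = ⊤ := by
    rw [eq_top_iff]
    rintro y -
    obtain ⟨r, rfl⟩ := J.mkQ_surjective y
    obtain ⟨n, hn⟩ := P.exhF r
    have hle : (P.F N).map J.mkQ ≤ (P.F (N + n)).map J.mkQ :=
      map_mono (P.F_mono (Nat.le_add_right N n))
    have heq := Submodule.eq_of_le_of_finrank_le hle (hmax (N + n))
    rw [heq]
    exact mem_map_of_mem (P.F_mono (Nat.le_add_left n N) hn)
  have : FiniteDimensional K ((P.F N).map J.mkQ) := inferInstance
  rw [htop] at this
  exact Module.finite_def.2 ((Module.Finite.iff_fg (N := (⊤ : Submodule K (R ⧸ J)))).1 this)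

/-- right multiplication on the quotient -/
def rho {J : Submodule K R} (hJ : IsR J) (a : R) : End K (R ⧸ J) :=
  J.mapQ J (LinearMap.mulRight K a) (fun x hx => hJ x hx a)

lemma rho_mk {J : Submodule K R} (hJ : IsR J) (a r : R) : rho hJ a (J.mkQ r) = J.mkQ (r * a) := rfl

lemma rho_ext {J : Submodule K R} {f g : End K (R ⧸ J)} (h : ∀ r, f (J.mkQ r) = g (J.mkQ r)) :
    f = g := by
  ext r
  exact h r

lemma rho_mul {J : Submodule K R} (hJ : IsR J) (a b : R) :
    rho hJ (a * b) = rho hJ b * rho hJ a := by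
  apply rho_ext
  intro r
  simp only [Module.End.mul_apply, rho_mk, mul_assoc]

lemma rho_add {J : Submodule K R} (hJ : IsR J) (a b : R) :
    rho hJ (a + b) = rho hJ a + rho hJ b := by
  apply rho_ext
  intro r
  simp only [LinearMap.add_apply, rho_mk, mul_add, map_add]

lemma rho_smul {J : Submodule K R} (hJ : IsR J) (c : K) (b : R) :
    rho hJ (c • b) = c • rho hJ b := by
  apply rho_ext
  intro r
  simp only [LinearMap.smul_apply, rho_mk, mul_smul_comm, map_smul]

end PBW

namespace DUData
variable {K A : Type} [Field K] [Ring A] [Algebra K A] {lam μ : K} (T : DUData K A lam μ)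

/-- second normal-type element -/
def y : A := T.x + (lam - μ) • (T.U * T.D)

/-- the normal element -/
def z : A := T.x * T.y

lemma yeq : (lam - μ) • (T.D * T.U) = lam • T.y - μ • T.x := by
  rw [T.hDU, y]; module

lemma hDy : T.D * T.y = lam • (T.y * T.D) := by
  have : T.D * T.y = T.D * T.x + ((lam - μ) • (T.D * T.U)) * T.D := by
    rw [y, mul_add, smul_mul_assoc, mul_smul_comm, mul_assoc]
  rw [this, T.yeq, T.hDx, sub_mul, smul_mul_assoc, smul_mul_assoc]; module

lemma hyU : T.y * T.U = lam • (T.U * T.y) := by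
  have : T.y * T.U = T.x * T.U + T.U * ((lam - μ) • (T.D * T.U)) := by
    rw [y, add_mul, smul_mul_assoc, mul_smul_comm, mul_assoc]
  rw [this, T.yeq, T.hxU, mul_sub, mul_smul_comm, mul_smul_comm]; module

lemma hDz : T.D * T.z = (lam * μ) • (T.z * T.D) := by
  rw [z, ← mul_assoc, T.hDx, smul_mul_assoc, mul_assoc, T.hDy, mul_smul_comm, smul_smul,
    mul_assoc, mul_comm μ]

lemma hzU : T.z * T.U = (lam * μ) • (T.U * T.z) := by
  rw [z, mul_assoc, T.hyU, mul_smul_comm, ← mul_assoc, T.hxU, smul_mul_assoc, smul_smul, mul_assoc]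

lemma z_left (a : A) : ∃ b, T.z * a = b * T.z := by
  have hlm : lam * μ ≠ 0 := mul_ne_zero T.hlam T.hμ
  have ha : a ∈ Algebra.adjoin K {T.D, T.U} := by rw [T.hgen]; trivial
  induction ha using Algebra.adjoin_induction with
  | mem r hr =>
    rcases hr with rfl | rfl
    · refine ⟨(lam * μ)⁻¹ • T.D, ?_⟩
      rw [smul_mul_assoc, T.hDz, smul_smul, inv_mul_cancel₀ hlm, one_smul]
    · exact ⟨(lam * μ) • T.U, by rw [T.hzU, smul_mul_assoc]⟩
  | algebraMap c => exact ⟨algebraMap K A c, (Algebra.commutes c T.z).symm⟩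
  | add a b _ _ ha hb =>
    obtain ⟨a', ha⟩ := ha
    obtain ⟨b', hb⟩ := hb
    exact ⟨a' + b', by rw [mul_add, add_mul, ha, hb]⟩
  | mul a b _ _ ha hb =>
    obtain ⟨a', ha⟩ := ha
    obtain ⟨b', hb⟩ := hb
    exact ⟨a' * b', by rw [← mul_assoc, ha, mul_assoc, hb, mul_assoc]⟩

lemma z_right (s : A) : ∃ t, s * T.z = T.z * t := by
  have hlm : lam * μ ≠ 0 := mul_ne_zero T.hlam T.hμ
  have ha : s ∈ Algebra.adjoin K {T.D, T.U} := by rw [T.hgen]; trivial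
  induction ha using Algebra.adjoin_induction with
  | mem r hr =>
    rcases hr with rfl | rfl
    · exact ⟨(lam * μ) • T.D, by rw [T.hDz, mul_smul_comm]⟩
    · refine ⟨(lam * μ)⁻¹ • T.U, ?_⟩
      rw [mul_smul_comm, T.hzU, smul_smul, inv_mul_cancel₀ hlm, one_smul]
  | algebraMap c => exact ⟨algebraMap K A c, Algebra.commutes c T.z⟩
  | add a b _ _ ha hb =>
    obtain ⟨a', ha⟩ := ha
    obtain ⟨b', hb⟩ := hb
    exact ⟨a' + b', by rw [mul_add, add_mul, ha, hb]⟩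
  | mul a b _ _ ha hb =>
    obtain ⟨a', ha⟩ := ha
    obtain ⟨b', hb⟩ := hb
    exact ⟨a' * b', by rw [mul_assoc, hb, ← mul_assoc, ha, mul_assoc]⟩

open PBW

lemma eq_top [IsAlgClosed K] (hne : lam ≠ μ) (hru : ∀ n : ℕ, 0 < n → (lam / μ) ^ n ≠ 1)
    {J : Submodule K A} (hJ : IsR J) (hg : T.pbw.Gb 1 J ⊤) (hz : J ⊔ rid K T.z = ⊤) : J = ⊤ := by
  have := finite_of_Gb hg
  have hs : Subsingleton (A ⧸ J) := by
    refine vanish T.hlam T.hμ hne hru (rho hJ T.D) (rho hJ T.U) (rho hJ T.x) (rho hJ T.y) ?_ ?_ ?_ ?_ ?_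
    · rw [← rho_mul, T.hDU, rho_add, rho_smul, rho_mul]
    · rw [y, rho_add, rho_smul, rho_mul]
    · rw [← rho_mul, T.hDx, rho_smul, rho_mul]
    · rw [← rho_mul, T.hxU, rho_smul, rho_mul]
    · rw [← rho_mul]
      intro w
      obtain ⟨r, rfl⟩ := J.mkQ_surjective w
      have hr : r ∈ J ⊔ rid K T.z := by rw [hz]; trivial
      obtain ⟨j, hj, s, rfl⟩ := mem_sup_rid hr
      obtain ⟨b, hb⟩ := T.z_left s
      refine ⟨J.mkQ b, ?_⟩
      rw [rho_mk, hb, map_add, mkQ_apply J j, (Submodule.Quotient.mk_eq_zero J).2 hj, zero_add]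
      rfl
  exact Submodule.Quotient.subsingleton_iff.1 hs

/-- main upper bound, in ideal form -/
lemma upper (T : DUData K A lam μ) [IsAlgClosed K] (hne : lam ≠ μ) (hru : ∀ n : ℕ, 0 < n → (lam / μ) ^ n ≠ 1)
    (a₁ a₂ a₃ d : A) (htop : rid K a₁ ⊔ rid K a₂ ⊔ rid K a₃ ⊔ rid K d = ⊤) :
    ∃ r₁ r₂ r₃ : A, rid K (a₁ + d * r₁) ⊔ rid K (a₂ + d * r₂) ⊔ rid K (a₃ + d * r₃) = ⊤ := by
  obtain ⟨s₁, s₂, s₃, h1⟩ := three_slot 0 (isR_rid T.z) (T.Gb_xy hne) a₁ a₂ a₃ d (by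
    rw [sup_assoc, sup_assoc, sup_assoc, ← sup_assoc (rid K a₂), ← sup_assoc (rid K a₁),
      ← sup_assoc (rid K a₁), htop, sup_top_eq])
  have h1' := h1.eq le_top
  set b₁ := a₁ + d * s₁ with hb₁
  set b₂ := a₂ + d * s₂ with hb₂
  set b₃ := a₃ + d * s₃ with hb₃
  set J := rid K b₁ ⊔ rid K b₂ ⊔ rid K b₃ with hJdef
  have hJ : IsR J := ((isR_rid _).sup (isR_rid _)).sup (isR_rid _)
  have hJz : rid K T.z ⊔ J = ⊤ := by rw [← h1', hJdef]; ac_rfl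
  have m1 : ∀ x ∈ rid K b₁, x ∈ J := fun x hx => mem_sup_left (mem_sup_left hx)
  have m2 : ∀ x ∈ rid K b₂, x ∈ J := fun x hx => mem_sup_left (mem_sup_right hx)
  have m3 : ∀ x ∈ rid K b₃, x ∈ J := fun x hx => mem_sup_right hx
  have hJd : J ⊔ rid K d = ⊤ := by
    rw [eq_top_iff, ← htop]
    have hR : IsR (J ⊔ rid K d) := hJ.sup (isR_rid _)
    have gen : ∀ a b s : A, b = a + d * s → (∀ x ∈ rid K b, x ∈ J) → rid K a ≤ J ⊔ rid K d := by
      intro a b s hb hx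
      refine rid_le hR ?_
      have e : a = b - d * s := by rw [hb]; abel
      rw [e]
      exact sub_mem (mem_sup_left (hx _ (self_mem_rid _))) (mem_sup_right (mul_mem_rid _ _))
    exact sup_le (sup_le (sup_le (gen _ _ _ hb₁ m1) (gen _ _ _ hb₂ m2)) (gen _ _ _ hb₃ m3))
      le_sup_right
  have hJdz : J ⊔ rid K (d * T.z) = ⊤ := by
    rw [eq_top_iff]
    rintro w -
    have hw : w ∈ J ⊔ rid K T.z := by rw [sup_comm, hJz]; trivial
    obtain ⟨j, hj, s, rfl⟩ := mem_sup_rid hw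
    obtain ⟨b, hb⟩ := T.z_left s
    have hb' : b ∈ J ⊔ rid K d := by rw [hJd]; trivial
    obtain ⟨j', hj', s', hs'⟩ := mem_sup_rid hb'
    obtain ⟨t, ht⟩ := T.z_right s'
    rw [hb, hs', add_mul, mul_assoc, ht, ← mul_assoc]
    exact add_mem (mem_sup_left hj) (add_mem (mem_sup_left (hJ _ hj' _))
      (mem_sup_right (mul_mem_rid _ _)))
  obtain ⟨t₁, t₂, t₃, h2⟩ := three_slot 1 (isR_bot (K := K) (R := A)) T.Gb_bot b₁ b₂ b₃ (d * T.z) (by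
    rw [bot_sup_eq]; exact hJdz)
  rw [bot_sup_eq] at h2
  refine ⟨s₁ + T.z * t₁, s₂ + T.z * t₂, s₃ + T.z * t₃, ?_⟩
  have ee : ∀ a s t : A, a + d * (s + T.z * t) = a + d * s + d * T.z * t := by
    intro a s t; rw [mul_add, mul_assoc, add_assoc]
  rw [ee, ee, ee]
  refine T.eq_top hne hru (((isR_rid _).sup (isR_rid _)).sup (isR_rid _)) h2 ?_
  rw [eq_top_iff, ← hJz]
  set J' := rid K (b₁ + d * T.z * t₁) ⊔ rid K (b₂ + d * T.z * t₂) ⊔ rid K (b₃ + d * T.z * t₃) with hJ'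
  have hJ'R : IsR J' := ((isR_rid _).sup (isR_rid _)).sup (isR_rid _)
  have hR : IsR (J' ⊔ rid K T.z) := hJ'R.sup (isR_rid _)
  have gen : ∀ b t : A, b + d * T.z * t ∈ J' → rid K b ≤ J' ⊔ rid K T.z := by
    intro b t h
    refine rid_le hR ?_
    have e : b = (b + d * T.z * t) - d * T.z * t := by abel
    rw [e]
    refine sub_mem (mem_sup_left h) (mem_sup_right ?_)
    obtain ⟨t', ht'⟩ := T.z_right d
    rw [ht', mul_assoc]
    exact mul_mem_rid _ _
  refine sup_le le_sup_right (sup_le (sup_le (gen _ t₁ ?_) (gen _ t₂ ?_)) (gen _ t₃ ?_))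
  · exact mem_sup_left (mem_sup_left (self_mem_rid _))
  · exact mem_sup_left (mem_sup_right (self_mem_rid _))
  · exact mem_sup_right (self_mem_rid _)

end DUData
end DUA

namespace DUA

open Classical Submodule Module

section
variable {K : Type} [Field K] {α β : K}

lemma du_rel1 : DownUp.D K α β 0 * DownUp.U K α β 0 * DownUp.U K α β 0 =
    α • (DownUp.U K α β 0 * DownUp.D K α β 0 * DownUp.U K α β 0) +
    β • (DownUp.U K α β 0 * DownUp.U K α β 0 * DownUp.D K α β 0) := by
  have h := RingQuot.mkAlgHom_rel K (DownUpRel.rel1 (K := K) (a := α) (b := β) (g := 0))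
  simp only [map_add, map_mul, map_smul, zero_smul, add_zero] at h
  exact h

lemma du_rel2 : DownUp.D K α β 0 * DownUp.D K α β 0 * DownUp.U K α β 0 =
    α • (DownUp.D K α β 0 * DownUp.U K α β 0 * DownUp.D K α β 0) +
    β • (DownUp.U K α β 0 * DownUp.D K α β 0 * DownUp.D K α β 0) := by
  have h := RingQuot.mkAlgHom_rel K (DownUpRel.rel2 (K := K) (a := α) (b := β) (g := 0))
  simp only [map_add, map_mul, map_smul, zero_smul, add_zero] at h
  exact h

lemma du_gen : Algebra.adjoin K {DownUp.D K α β 0, DownUp.U K α β 0} = ⊤ := by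
  have h := FreeAlgebra.adjoin_range_ι K (Fin 2)
  have h2 := congrArg (Subalgebra.map (RingQuot.mkAlgHom K (DownUpRel K α β 0))) h
  rw [Algebra.map_top, (AlgHom.range_eq_top _).2 (RingQuot.mkAlgHom_surjective K _),
    AlgHom.map_adjoin] at h2
  rw [← h2]
  congr 1
  ext w
  constructor
  · rintro (h | h)
    · exact ⟨_, ⟨0, rfl⟩, h.symm⟩
    · exact ⟨_, ⟨1, rfl⟩, (Set.mem_singleton_iff.1 h).symm⟩
  · rintro ⟨_, ⟨i, rfl⟩, h⟩
    rw [← h]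
    fin_cases i
    · exact Or.inl rfl
    · exact Or.inr rfl

lemma neg_smul_id {A : Type} [AddCommGroup A] [Module K A] {b c : K} (h : b = -c) (q : A) :
    b • q = -(c • q) := by
  rw [h, neg_smul]

/-- the down-up algebra as an instance of the abstract data -/
def duData {lam μ : K} (hβ : β ≠ 0) (hsum : lam + μ = α) (hprod : lam * μ = -β) :
    DUData K (DownUp K α β 0) lam μ where
  D := DownUp.D K α β 0
  U := DownUp.U K α β 0
  x := DownUp.D K α β 0 * DownUp.U K α β 0 - lam • (DownUp.U K α β 0 * DownUp.D K α β 0)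
  hDU := by abel
  hDx := by
    have h := du_rel2 (K := K) (α := α) (β := β)
    have hb : β = -(lam * μ) := by rw [hprod, neg_neg]
    rw [mul_sub, ← mul_assoc, h, sub_mul, mul_smul_comm, smul_mul_assoc, ← mul_assoc]
    rw [smul_sub, smul_smul]
    generalize DownUp.D K α β 0 * DownUp.U K α β 0 * DownUp.D K α β 0 = p
    generalize DownUp.U K α β 0 * DownUp.D K α β 0 * DownUp.D K α β 0 = q
    have e1 : α • p = lam • p + μ • p := by rw [← add_smul, hsum]
    have e2 : β • q = -((μ * lam) • q) := by
      rw [mul_comm]; exact neg_smul_id hb q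
    rw [e1, e2]; abel
  hxU := by
    have h := du_rel1 (K := K) (α := α) (β := β)
    have hb : β = -(lam * μ) := by rw [hprod, neg_neg]
    rw [sub_mul, h, mul_sub, mul_smul_comm, smul_mul_assoc, ← mul_assoc, ← mul_assoc]
    rw [smul_sub, smul_smul]
    generalize DownUp.U K α β 0 * DownUp.D K α β 0 * DownUp.U K α β 0 = p
    generalize DownUp.U K α β 0 * DownUp.U K α β 0 * DownUp.D K α β 0 = q
    have e1 : α • p = lam • p + μ • p := by rw [← add_smul, hsum]
    have e2 : β • q = -((μ * lam) • q) := by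
      rw [mul_comm]; exact neg_smul_id hb q
    rw [e1, e2]; abel
  hgen := du_gen
  hlam := by rintro rfl; apply hβ; rw [zero_mul] at hprod; exact neg_eq_zero.1 hprod.symm
  hμ := by rintro rfl; apply hβ; rw [mul_zero] at hprod; exact neg_eq_zero.1 hprod.symm

/-- the character onto the polynomial ring with `D ↦ X`, `U ↦ 0` -/
def toPoly (α β : K) : DownUp K α β 0 →ₐ[K] Polynomial K :=
  RingQuot.liftAlgHom K ⟨FreeAlgebra.lift K ![Polynomial.X, 0], by
    rintro _ _ (_ | _) <;> simp⟩

lemma toPoly_D : toPoly α β (DownUp.D K α β 0) = Polynomial.X := by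
  simp [toPoly, DownUp.D, RingQuot.liftAlgHom_mkAlgHom_apply]

end

lemma unimod_iff {R : Type} [Ring R] {s : ℕ} (u : Fin s → R) :
    IsUnimodularRow u ↔ ∃ c : Fin s → R, ∑ i, u i * c i = 1 := by
  unfold IsUnimodularRow
  constructor
  · intro h
    have h1 : (1 : R) ∈ Submodule.span Rᵐᵒᵖ (Set.range u) := by rw [h]; trivial
    obtain ⟨c, hc⟩ := (Submodule.mem_span_range_iff_exists_fun _).1 h1
    exact ⟨fun i => (c i).unop, hc⟩
  · rintro ⟨c, hc⟩
    rw [eq_top_iff]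
    rintro w -
    refine (Submodule.mem_span_range_iff_exists_fun _).2 ⟨fun i => MulOpposite.op (c i * w), ?_⟩
    show ∑ i, u i * (c i * w) = w
    simp only [← mul_assoc]
    rw [← Finset.sum_mul, hc, one_mul]

lemma three_mem {K A : Type} [Field K] [IsAlgClosed K] [Ring A] [Algebra K A] {lam μ : K}
    (T : DUData K A lam μ) (hne : lam ≠ μ) (hru : ∀ n : ℕ, 0 < n → (lam / μ) ^ n ≠ 1)
    (u : Fin (3 + 1) → A) (hu : IsUnimodularRow u) : IsStableRow u := by
  obtain ⟨c, hc⟩ := (unimod_iff u).1 hu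
  rw [Fin.sum_univ_four] at hc
  have htop : PBW.rid K (u 0) ⊔ PBW.rid K (u 1) ⊔ PBW.rid K (u 2) ⊔ PBW.rid K (u 3) = ⊤ := by
    rw [eq_top_iff]
    rintro w -
    rw [← one_mul w, ← hc]
    simp only [add_mul, mul_assoc]
    exact add_mem (mem_sup_left (add_mem (mem_sup_left (add_mem (mem_sup_left (PBW.mul_mem_rid _ _))
      (mem_sup_right (PBW.mul_mem_rid _ _)))) (mem_sup_right (PBW.mul_mem_rid _ _))))
      (mem_sup_right (PBW.mul_mem_rid _ _))
  obtain ⟨r₁, r₂, r₃, h⟩ := DUData.upper T hne hru _ _ _ _ htop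
  refine ⟨![r₁, r₂, r₃], (unimod_iff _).2 ?_⟩
  have h1 : (1 : A) ∈ PBW.rid K (u 0 + u 3 * r₁) ⊔ PBW.rid K (u 1 + u 3 * r₂) ⊔
      PBW.rid K (u 2 + u 3 * r₃) := by rw [h]; trivial
  obtain ⟨p, hp, q, hq, hpq⟩ := mem_sup.1 h1
  obtain ⟨p1, hp1, p2, hp2, hp12⟩ := mem_sup.1 hp
  obtain ⟨a, ha⟩ := PBW.mem_rid.1 hp1
  obtain ⟨b, hb⟩ := PBW.mem_rid.1 hp2
  obtain ⟨e, he⟩ := PBW.mem_rid.1 hq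
  refine ⟨![a, b, e], ?_⟩
  rw [Fin.sum_univ_three, ← hpq, ← hp12, ← ha, ← hb, ← he]
  rfl

lemma poly_not_unit {K : Type} [Field K] (r c : Polynomial K)
    (h : (Polynomial.X + (Polynomial.X ^ 2 - 1) * r) * c = 1) : False := by
  open Polynomial in
  have hu : IsUnit (X + (X ^ 2 - 1) * r : Polynomial K) := IsUnit.of_mul_eq_one _ h
  have hd := Polynomial.natDegree_eq_zero_of_isUnit hu
  have hm : (X ^ 2 - 1 : Polynomial K).natDegree = 2 := by
    have := Polynomial.natDegree_X_pow_sub_C (R := K) (n := 2) (r := 1)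
    simpa using this
  have hm0 : (X ^ 2 - 1 : Polynomial K) ≠ 0 := by
    intro h0; rw [h0] at hm; simp at hm
  by_cases hr : r = 0
  · rw [hr, mul_zero, add_zero, Polynomial.natDegree_X] at hd
    omega
  · have h2 : ((X ^ 2 - 1) * r : Polynomial K).natDegree = 2 + r.natDegree := by
      rw [Polynomial.natDegree_mul hm0 hr, hm]
    rw [Polynomial.natDegree_add_eq_right_of_natDegree_lt (by rw [h2, Polynomial.natDegree_X]; omega), h2] at hd
    omega

lemma zero_not_mem {R : Type} [Ring R] [Nontrivial R] :
    ¬ ∀ u : Fin (0 + 1) → R, IsUnimodularRow u → IsStableRow u := by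
  intro h
  obtain ⟨r, hr⟩ := h (fun _ => 1) ((unimod_iff _).2 ⟨fun _ => 1, by simp⟩)
  obtain ⟨c, hc⟩ := (unimod_iff _).1 hr
  simp at hc

lemma row_id {R : Type} [Ring R] (D : R) : D * D + (D ^ 2 - 1) * (-1) = 1 := by
  rw [pow_two, mul_neg, mul_one]; abel

lemma one_not_mem {K : Type} [Field K] (α β : K) :
    ¬ ∀ u : Fin (1 + 1) → DownUp K α β 0, IsUnimodularRow u → IsStableRow u := by
  intro h
  set D := DownUp.D K α β 0 with hD
  obtain ⟨r, hr⟩ := h ![D, D ^ 2 - 1] ((unimod_iff _).2 ⟨![D, -1], by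
    rw [Fin.sum_univ_two]
    exact row_id D⟩)
  obtain ⟨c, hc⟩ := (unimod_iff _).1 hr
  rw [Fin.sum_univ_one] at hc
  have hc' : (D + (D ^ 2 - 1) * r 0) * c 0 = 1 := hc
  have := congrArg (toPoly α β) hc'
  simp only [map_mul, map_add, map_sub, map_pow, map_one, hD, toPoly_D] at this
  exact poly_not_unit _ _ this

end DUA

/-- Let `K` be algebraically closed of characteristic zero and
`A = A(α,β,0)` with `β ≠ 0` and `α + β ≠ 1`. If `t² − αt − β = (t − λ)(t − μ)` with
`λ ≠ μ` and `λ/μ` not a root of unity, then `2 ≤ sr(A) ≤ 3`. -/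
theorem downUp_stableRank_distinct_roots
    (K : Type) [Field K] [IsAlgClosed K] [CharZero K] (α β lam μ : K)
    (hβ : β ≠ 0) (h1 : α + β ≠ 1)
    (hsum : lam + μ = α) (hprod : lam * μ = -β) (hne : lam ≠ μ)
    (hru : ∀ n : ℕ, 0 < n → (lam / μ) ^ n ≠ 1) :
    2 ≤ stableRank (DownUp K α β 0) ∧ stableRank (DownUp K α β 0) ≤ 3 := by
  have h3 : (3 : ℕ) ∈ {t : ℕ | ∀ u : Fin (t + 1) → DownUp K α β 0,
      IsUnimodularRow u → IsStableRow u} :=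
    fun u hu => DUA.three_mem (DUA.duData hβ hsum hprod) hne hru u hu
  have : Nontrivial (DownUp K α β 0) := (DUA.toPoly α β).toRingHom.domain_nontrivial
  refine ⟨?_, Nat.sInf_le h3⟩
  have hm := Nat.sInf_mem (Set.nonempty_of_mem h3)
  have hs : stableRank (DownUp K α β 0) ∈ {t : ℕ | ∀ u : Fin (t + 1) → DownUp K α β 0,
      IsUnimodularRow u → IsStableRow u} := hm
  by_contra hlt
  have hlt' : stableRank (DownUp K α β 0) = 0 ∨ stableRank (DownUp K α β 0) = 1 := by omega
  rcases hlt' with e | e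
  · rw [e] at hs; exact DUA.zero_not_mem hs
  · rw [e] at hs; exact DUA.one_not_mem α β hs
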